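/- Let n ≤ m and n_1,…,n_m ≤ n be positive integers and N = n_1 + ⋯ + n_m. For each 1 ≤ i ≤ m let C_i be an n_i × n real matrix and Q_i a symmetric n_i × n_i matrix with C_i C_iᵀ ≤ I_{n_i}, Q_i ≥ I_{n_i}, (I_{n_i} − C_i C_iᵀ)(Q_i − I_{n_i}) = 0, and let p_i > 0. Let C be the N × n matrix whose block rows are C_1,…,C_m and let P = diag(p_1 I_{n_1},…,p_m I_{n_m}) be the N × N block-diagonal matrix. If C Cᵀ ≤ P^{-1}, then for all nonnegative functions f_i on ℝ^{n_i}, integrable with respect to γ_{n_i} and more log-convex than g_{(Q_i − I_{n_i})/(2π)}, one has ∫_{ℝⁿ} ∏_{i=1}^m f_i(C_i x)^{p_i} dγ_n(x) ≤ ∏_{i=1}^m (∫_{ℝ^{n_i}} f_i dγ_{n_i})^{p_i}. -/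

import Mathlib

open MeasureTheory Matrix
open scoped ENNReal

noncomputable section

/-- The centered Gaussian function attached to a matrix `Q` : `g_Q(x) = exp(-π⟨Qx,x⟩)`. -/
def gaussFn {k : ℕ} (Q : Matrix (Fin k) (Fin k) ℝ) (x : Fin k → ℝ) : ℝ :=
  Real.exp (-Real.pi * (Q.mulVec x ⬝ᵥ x))

/-- A nonnegative log-convex function. -/
def LogConvexFun {k : ℕ} (h : (Fin k → ℝ) → ℝ) : Prop :=
  (∀ x, 0 ≤ h x) ∧
    ∀ x y : Fin k → ℝ, ∀ a b : ℝ, 0 ≤ a → 0 ≤ b → a + b = 1 →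
      h (a • x + b • y) ≤ h x ^ a * h y ^ b

/-- `f` is more log-convex than `g_Q`, i.e. `f = g_Q · h` with `h` log-convex. -/
def MoreLogConvex {k : ℕ} (f : (Fin k → ℝ) → ℝ) (Q : Matrix (Fin k) (Fin k) ℝ) : Prop :=
  ∃ h : (Fin k → ℝ) → ℝ, LogConvexFun h ∧ f = fun x => gaussFn Q x * h x

/-- The standard Gaussian probability measure on `ℝ^k`. -/
def stdGaussian (k : ℕ) : Measure (Fin k → ℝ) :=
  volume.withDensity fun x =>
    ENNReal.ofReal ((2 * Real.pi) ^ (-(k : ℝ) / 2) * Real.exp (-(∑ i, x i ^ 2) / 2))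

section ScalarEstimates

lemma log_one_add_le_cubic {x : ℝ} (hx : -1 < x) :
    Real.log (1 + x) ≤ x - x ^ 2 / 2 + x ^ 3 / 3 := by
  have hd : ∀ y : ℝ, -1 < y → HasDerivAt
      (fun y : ℝ => y - y ^ 2 / 2 + y ^ 3 / 3 - Real.log (1 + y)) (y ^ 3 / (1 + y)) y := by
    intro y hy
    have h1 : (1 + y) ≠ 0 := by linarith
    have h := ((((hasDerivAt_id y).sub (((hasDerivAt_id y).pow 2).div_const 2)).add
      (((hasDerivAt_id y).pow 3).div_const 3)).sub (((hasDerivAt_id y).const_add 1).log h1))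
    refine h.congr_deriv ?_
    simp only [id]
    field_simp
    ring
  suffices h : 0 ≤ x - x ^ 2 / 2 + x ^ 3 / 3 - Real.log (1 + x) by linarith
  rcases le_total 0 x with h0 | h0
  · have hm : MonotoneOn (fun y : ℝ => y - y ^ 2 / 2 + y ^ 3 / 3 - Real.log (1 + y))
        (Set.Icc 0 x) := by
      refine monotoneOn_of_deriv_nonneg (convex_Icc _ _) (fun y hy =>
        (hd y (by linarith [hy.1])).continuousAt.continuousWithinAt) (fun y hy => ?_) fun y hy => ?_
      · rw [interior_Icc] at hy
        exact (hd y (by linarith [hy.1])).differentiableAt.differentiableWithinAt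
      · rw [interior_Icc] at hy
        rw [(hd y (by linarith [hy.1])).deriv]
        exact div_nonneg (pow_nonneg hy.1.le 3) (by linarith [hy.1])
    have := hm (Set.left_mem_Icc.2 h0) (Set.right_mem_Icc.2 h0) h0
    simpa using this
  · have hm : AntitoneOn (fun y : ℝ => y - y ^ 2 / 2 + y ^ 3 / 3 - Real.log (1 + y))
        (Set.Icc x 0) := by
      refine antitoneOn_of_deriv_nonpos (convex_Icc _ _) (fun y hy =>
        (hd y (by linarith [hy.1])).continuousAt.continuousWithinAt) (fun y hy => ?_) fun y hy => ?_
      · rw [interior_Icc] at hy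
        exact (hd y (by linarith [hy.1])).differentiableAt.differentiableWithinAt
      · rw [interior_Icc] at hy
        rw [(hd y (by linarith [hy.1])).deriv]
        refine div_nonpos_of_nonpos_of_nonneg ?_ (by linarith [hy.1])
        have : y ^ 3 = y * y ^ 2 := by ring
        rw [this]
        exact mul_nonpos_of_nonpos_of_nonneg hy.2.le (sq_nonneg y)
    have := hm (Set.left_mem_Icc.2 h0) (Set.right_mem_Icc.2 h0) h0
    simpa using this

lemma exp_le_quadratic_add_cubic (s : ℝ) :
    Real.exp s ≤ 1 + s + s ^ 2 / 2 + |s| ^ 3 * Real.exp |s| := by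
  have h := Complex.norm_exp_sub_sum_le_norm_mul_exp (s : ℂ) 3
  have e : Complex.exp (s : ℂ) - ∑ m ∈ Finset.range 3, (s : ℂ) ^ m / (m.factorial : ℂ)
      = ((Real.exp s - (1 + s + s ^ 2 / 2) : ℝ) : ℂ) := by
    simp [Finset.sum_range_succ]
  rw [e, Complex.norm_real, Complex.norm_real, Real.norm_eq_abs, Real.norm_eq_abs] at h
  linarith [le_abs_self (Real.exp s - (1 + s + s ^ 2 / 2))]

lemma abs_sum_mul_le {ι : Type*} [Fintype ι] {c v : ι → ℝ} (hc : ∀ i, 0 ≤ c i) {A : ℝ}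
    (hv : ∀ i, |v i| ≤ A) : |∑ i, c i * v i| ≤ (∑ i, c i) * A := by
  refine (Finset.abs_sum_le_sum_abs _ _).trans ?_
  rw [Finset.sum_mul]
  refine Finset.sum_le_sum fun i _ => ?_
  rw [abs_mul, abs_of_nonneg (hc i)]
  exact mul_le_mul_of_nonneg_left (hv i) (hc i)

/-- Second order expansion of a weighted geometric mean of perturbations of `1`, with a uniform
cubic error term. -/
lemma exists_prod_rpow_one_add_le {ι : Type*} [Fintype ι] {c : ι → ℝ} (hc : ∀ i, 0 ≤ c i)
    {M : ℝ} (hM : 1 ≤ M) :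
    ∃ K : ℝ, 0 ≤ K ∧ ∀ (η l : ι → ℝ) (τ G : ℝ), 0 < τ → τ ≤ 1 → 1 ≤ G → (∀ i, -1 < η i) →
      (∀ i, |η i| ≤ M) → (∀ i, |l i| ≤ M * G) → (∀ i, |η i - τ * l i| ≤ M * τ ^ 2 * G ^ 2) →
      ∏ i, (1 + η i) ^ c i ≤ 1 + ∑ i, c i * η i
        + τ ^ 2 / 2 * ((∑ i, c i * l i) ^ 2 - ∑ i, c i * l i ^ 2) + K * τ ^ 3 * G ^ 6 := by
  set S := ∑ i, c i with hS
  have hS0 : 0 ≤ S := Finset.sum_nonneg fun i _ => hc i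
  set s0 := S * (M + M ^ 2 + M ^ 3)
  refine ⟨8 / 3 * S * M ^ 3 + 3 / 2 * S * M ^ 2 + 12 * S ^ 2 * M ^ 6 + 3 / 2 * S ^ 2 * M ^ 2
    + 64 * Real.exp s0 * S ^ 3 * M ^ 9, by positivity, ?_⟩
  intro η l τ G hτ hτ1 hG hη1 hηM hl hηl
  have hM0 : 0 < M := by linarith
  have hG0 : 0 < G := by linarith
  set q := τ * G ^ 2 with hq
  have hq0 : 0 < q := by positivity
  have hτG : τ * G ≤ q := by
    rw [hq]; exact mul_le_mul_of_nonneg_left (by nlinarith) hτ.le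
  have hτ2 : τ ^ 2 * G ^ 2 ≤ q := by
    rw [hq]; exact mul_le_mul_of_nonneg_right (by nlinarith) (by positivity)
  have hτ2' : τ ^ 2 * G ^ 2 ≤ q ^ 2 := by
    have : q ^ 2 = τ ^ 2 * G ^ 2 * G ^ 2 := by rw [hq]; ring
    rw [this]
    exact le_mul_of_one_le_right (by positivity) (by nlinarith)
  have htl : ∀ i, |τ * l i| ≤ M * q := by
    intro i
    rw [abs_mul, abs_of_pos hτ]
    calc τ * |l i| ≤ τ * (M * G) := mul_le_mul_of_nonneg_left (hl i) hτ.le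
      _ = M * (τ * G) := by ring
      _ ≤ M * q := mul_le_mul_of_nonneg_left hτG hM0.le
  have hd1 : ∀ i, |η i - τ * l i| ≤ M * q := fun i => (hηl i).trans (by
    rw [mul_assoc]; exact mul_le_mul_of_nonneg_left hτ2 hM0.le)
  have hd2 : ∀ i, |η i - τ * l i| ≤ M * q ^ 2 := fun i => (hηl i).trans (by
    rw [mul_assoc]; exact mul_le_mul_of_nonneg_left hτ2' hM0.le)
  have hη2 : ∀ i, |η i| ≤ 2 * M * q := fun i => by
    have := abs_add_le (η i - τ * l i) (τ * l i)
    rw [sub_add_cancel] at this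
    linarith [htl i, hd1 i]
  have hηsq : ∀ i, η i ^ 2 ≤ 4 * M ^ 2 * q ^ 2 := fun i => by
    rw [← sq_abs]
    calc |η i| ^ 2 ≤ (2 * M * q) ^ 2 := pow_le_pow_left₀ (abs_nonneg _) (hη2 i) 2
      _ = _ := by ring
  have hηsq' : ∀ i, η i ^ 2 ≤ 2 * M ^ 2 * q := fun i => by
    rw [← sq_abs, sq]
    calc |η i| * |η i| ≤ M * (2 * M * q) :=
          mul_le_mul (hηM i) (hη2 i) (abs_nonneg _) hM0.le
      _ = _ := by ring
  have hcub : ∀ i, |η i ^ 3| ≤ M * η i ^ 2 := fun i => by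
    have : |η i ^ 3| = |η i| * η i ^ 2 := by rw [abs_pow, ← sq_abs (η i)]; ring
    rw [this]
    exact mul_le_mul_of_nonneg_right (hηM i) (sq_nonneg _)
  have hcub' : ∀ i, |η i ^ 3| ≤ 8 * M ^ 3 * q ^ 3 := fun i => by
    rw [abs_pow]
    calc |η i| ^ 3 ≤ (2 * M * q) ^ 3 := pow_le_pow_left₀ (abs_nonneg _) (hη2 i) 3
      _ = _ := by ring
  have hMM : M ≤ M ^ 3 := le_self_pow₀ hM (by norm_num)
  have hMM2 : M ^ 2 ≤ M ^ 3 := pow_le_pow_right₀ hM (by norm_num)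
  set s := ∑ i, c i * (η i - η i ^ 2 / 2 + η i ^ 3 / 3) with hs
  set σ := ∑ i, c i * η i with hσ
  have h1 : ∏ i, (1 + η i) ^ c i ≤ Real.exp s := by
    rw [hs, Real.exp_sum]
    refine Finset.prod_le_prod (fun i _ => Real.rpow_nonneg (by linarith [hη1 i]) _) fun i _ => ?_
    rw [Real.rpow_def_of_pos (by linarith [hη1 i]), mul_comm]
    exact Real.exp_le_exp.2 (mul_le_mul_of_nonneg_left (log_one_add_le_cubic (hη1 i)) (hc i))
  have hs0 : |s| ≤ s0 := by
    refine abs_sum_mul_le hc fun i => ?_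
    have a1 := hηM i
    have a2 : η i ^ 2 ≤ M ^ 2 := by rw [← sq_abs]; exact pow_le_pow_left₀ (abs_nonneg _) a1 2
    have a3 : M * η i ^ 2 ≤ M ^ 3 := by
      calc M * η i ^ 2 ≤ M * M ^ 2 := mul_le_mul_of_nonneg_left a2 hM0.le
        _ = _ := by ring
    have a4 := abs_le.1 (hcub i)
    have a5 := abs_le.1 a1
    have a6 := sq_nonneg (η i)
    rw [abs_le]; constructor <;> linarith
  have hsq : |s| ≤ S * (4 * M ^ 3 * q) := by
    refine abs_sum_mul_le hc fun i => ?_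
    have a1 := abs_le.1 (hη2 i)
    have a2 := hηsq' i
    have a3 : M * η i ^ 2 ≤ 2 * M ^ 3 * q := by
      calc M * η i ^ 2 ≤ M * (2 * M ^ 2 * q) := mul_le_mul_of_nonneg_left a2 hM0.le
        _ = _ := by ring
    have a4 := abs_le.1 (hcub i)
    have a6 := sq_nonneg (η i)
    have a7 := mul_le_mul_of_nonneg_right hMM hq0.le
    have a8 := mul_le_mul_of_nonneg_right hMM2 hq0.le
    rw [abs_le]; constructor <;> linarith
  have hsσ : |s - σ| ≤ S * (4 * M ^ 3 * q ^ 2) := by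
    have : s - σ = ∑ i, c i * (- η i ^ 2 / 2 + η i ^ 3 / 3) := by
      rw [hs, hσ, ← Finset.sum_sub_distrib]
      exact Finset.sum_congr rfl fun i _ => by ring
    rw [this]
    refine abs_sum_mul_le hc fun i => ?_
    have a2 := hηsq i
    have a3 : M * η i ^ 2 ≤ 4 * M ^ 3 * q ^ 2 := by
      calc M * η i ^ 2 ≤ M * (4 * M ^ 2 * q ^ 2) := mul_le_mul_of_nonneg_left a2 hM0.le
        _ = _ := by ring
    have a4 := abs_le.1 (hcub i)
    have a6 := sq_nonneg (η i)
    have a8 := mul_le_mul_of_nonneg_right hMM2 (sq_nonneg q)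
    rw [abs_le]; constructor <;> linarith
  have hσ1 : |σ| ≤ S * (2 * M ^ 3 * q) := by
    refine abs_sum_mul_le hc fun i => (hη2 i).trans ?_
    have a7 := mul_le_mul_of_nonneg_right hMM hq0.le
    linarith
  have hs_le : s ≤ σ - (∑ i, c i * η i ^ 2) / 2 + 8 / 3 * S * M ^ 3 * q ^ 3 := by
    have e : s = σ - (∑ i, c i * η i ^ 2) / 2 + (∑ i, c i * η i ^ 3) / 3 := by
      rw [hs, hσ, Finset.sum_div, Finset.sum_div, ← Finset.sum_sub_distrib,
        ← Finset.sum_add_distrib]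
      exact Finset.sum_congr rfl fun i _ => by ring
    have := (abs_le.1 (abs_sum_mul_le hc hcub')).2
    rw [← hS] at this
    linarith
  have hR : τ ^ 2 * ∑ i, c i * l i ^ 2 - 3 * S * M ^ 2 * q ^ 3 ≤ ∑ i, c i * η i ^ 2 := by
    have := abs_sum_mul_le (c := c) (v := fun i => η i ^ 2 - τ ^ 2 * l i ^ 2)
      (A := 3 * M ^ 2 * q ^ 3) hc fun i => by
        have e : η i ^ 2 - τ ^ 2 * l i ^ 2 = (η i - τ * l i) * (η i + τ * l i) := by ring
        rw [e, abs_mul]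
        calc |η i - τ * l i| * |η i + τ * l i| ≤ (M * q ^ 2) * (3 * M * q) :=
              mul_le_mul (hd2 i) ((abs_add_le _ _).trans (by linarith [hη2 i, htl i]))
                (abs_nonneg _) (by positivity)
          _ = _ := by ring
    have e : ∑ i, c i * (η i ^ 2 - τ ^ 2 * l i ^ 2)
        = ∑ i, c i * η i ^ 2 - τ ^ 2 * ∑ i, c i * l i ^ 2 := by
      rw [Finset.mul_sum, ← Finset.sum_sub_distrib]
      exact Finset.sum_congr rfl fun i _ => by ring
    rw [e, ← hS] at this
    linarith [(abs_le.1 this).1]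
  have hs2 : s ^ 2 ≤ σ ^ 2 + 24 * S ^ 2 * M ^ 6 * q ^ 3 := by
    have : (s - σ) * (s + σ) ≤ (S * (4 * M ^ 3 * q ^ 2)) * (S * (6 * M ^ 3 * q)) := by
      refine (le_abs_self _).trans ?_
      rw [abs_mul]
      refine mul_le_mul hsσ ((abs_add_le _ _).trans ?_) (abs_nonneg _) (by positivity)
      linarith
    nlinarith
  have hσ2 : σ ^ 2 ≤ τ ^ 2 * (∑ i, c i * l i) ^ 2 + 3 * S ^ 2 * M ^ 2 * q ^ 3 := by
    set ρ := ∑ i, c i * l i with hρ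
    have e : σ - τ * ρ = ∑ i, c i * (η i - τ * l i) := by
      rw [hσ, hρ, Finset.mul_sum, ← Finset.sum_sub_distrib]
      exact Finset.sum_congr rfl fun i _ => by ring
    have e' : σ + τ * ρ = ∑ i, c i * (η i + τ * l i) := by
      rw [hσ, hρ, Finset.mul_sum, ← Finset.sum_add_distrib]
      exact Finset.sum_congr rfl fun i _ => by ring
    have b1 : |σ - τ * ρ| ≤ S * (M * q ^ 2) := by
      rw [e]; exact abs_sum_mul_le hc hd2
    have b2 : |σ + τ * ρ| ≤ S * (3 * M * q) := by
      rw [e']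
      exact abs_sum_mul_le hc fun i => (abs_add_le _ _).trans (by linarith [hη2 i, htl i])
    have : (σ - τ * ρ) * (σ + τ * ρ) ≤ (S * (M * q ^ 2)) * (S * (3 * M * q)) := by
      refine (le_abs_self _).trans ?_
      rw [abs_mul]
      exact mul_le_mul b1 b2 (abs_nonneg _) (by positivity)
    nlinarith
  have hs3 : |s| ^ 3 * Real.exp |s| ≤ 64 * Real.exp s0 * S ^ 3 * M ^ 9 * q ^ 3 := by
    calc |s| ^ 3 * Real.exp |s| ≤ (S * (4 * M ^ 3 * q)) ^ 3 * Real.exp s0 :=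
          mul_le_mul (pow_le_pow_left₀ (abs_nonneg _) hsq 3) (Real.exp_le_exp.2 hs0)
            (Real.exp_pos _).le (by positivity)
      _ = _ := by ring
  have hq3 : q ^ 3 = τ ^ 3 * G ^ 6 := by rw [hq]; ring
  have := exp_le_quadratic_add_cubic s
  rw [mul_assoc, ← hq3]
  linarith

end ScalarEstimates

section GaussianAverages

lemma norm_le_of_adjoint_isometry {E F : Type*} [NormedAddCommGroup E] [InnerProductSpace ℝ E]
    [NormedAddCommGroup F] [InnerProductSpace ℝ F] (B : E →L[ℝ] F) (B' : F → E)
    (hB : ∀ x w, inner ℝ (B x) w = inner ℝ x (B' w)) (hB' : ∀ w, ‖B' w‖ = ‖w‖) (x : E) :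
    ‖B x‖ ≤ ‖x‖ := by
  have h := real_inner_le_norm x (B' (B x))
  rw [← hB, hB', real_inner_self_eq_norm_sq] at h
  rcases (norm_nonneg (B x)).eq_or_lt with h0 | h0
  · rw [← h0]; exact norm_nonneg x
  · nlinarith

variable {E F : Type*} [NormedAddCommGroup E] [InnerProductSpace ℝ E] [FiniteDimensional ℝ E]
  [MeasurableSpace E] [BorelSpace E] [NormedAddCommGroup F] [InnerProductSpace ℝ F]
  [FiniteDimensional ℝ F] [MeasurableSpace F] [BorelSpace F]

/-- The image of a standard Gaussian under the adjoint of an isometry is a standard Gaussian. -/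
lemma map_stdGaussian_of_adjoint_isometry (B : E →L[ℝ] F) (B' : F → E)
    (hB : ∀ x w, inner ℝ (B x) w = inner ℝ x (B' w)) (hB' : ∀ w, ‖B' w‖ = ‖w‖) :
    (ProbabilityTheory.stdGaussian E).map B = ProbabilityTheory.stdGaussian F := by
  have : IsProbabilityMeasure ((ProbabilityTheory.stdGaussian E).map B) :=
    Measure.isProbabilityMeasure_map B.continuous.aemeasurable
  refine Measure.ext_of_charFun ?_
  ext t
  rw [ProbabilityTheory.charFun_stdGaussian, ← hB' t, ← ProbabilityTheory.charFun_stdGaussian,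
    charFun_apply, charFun_apply, integral_map B.continuous.aemeasurable
      (by fun_prop : Continuous _).aestronglyMeasurable]
  simp_rw [hB]

lemma integral_inner_stdGaussian (a : E) :
    ∫ x, inner ℝ x a ∂(ProbabilityTheory.stdGaussian E) = 0 := by
  simpa [real_inner_comm] using
    ProbabilityTheory.integral_strongDual_stdGaussian (innerSL ℝ a)

lemma integrable_norm_pow_stdGaussian (k : ℕ) :
    Integrable (fun x : E => ‖x‖ ^ k) (ProbabilityTheory.stdGaussian E) := by
  simpa using (ProbabilityTheory.IsGaussian.memLp_id (ProbabilityTheory.stdGaussian E) k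
    (by simp)).integrable_norm_pow'

lemma integral_inner_sq_stdGaussian (a : E) :
    ∫ x, (inner ℝ x a) ^ 2 ∂(ProbabilityTheory.stdGaussian E) = ‖a‖ ^ 2 := by
  have h := ProbabilityTheory.variance_dual_stdGaussian (innerSL ℝ a)
  rw [ProbabilityTheory.variance_of_integral_eq_zero (by fun_prop)
    (ProbabilityTheory.integral_strongDual_stdGaussian _), innerSL_apply_norm] at h
  simpa [real_inner_comm] using h

lemma integrable_inner_stdGaussian (a : E) :
    Integrable (fun x => inner ℝ x a) (ProbabilityTheory.stdGaussian E) := by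
  refine ((integrable_norm_pow_stdGaussian 1).mul_const ‖a‖).mono'
    (by fun_prop : Continuous _).aestronglyMeasurable (.of_forall fun x => ?_)
  simpa using abs_real_inner_le_norm x a

lemma integrable_inner_sq_stdGaussian (a : E) :
    Integrable (fun x => (inner ℝ x a) ^ 2) (ProbabilityTheory.stdGaussian E) := by
  refine ((integrable_norm_pow_stdGaussian 2).mul_const (‖a‖ ^ 2)).mono'
    (by fun_prop : Continuous _).aestronglyMeasurable (.of_forall fun x => ?_)
  rw [Real.norm_eq_abs, abs_pow, ← mul_pow]
  exact pow_le_pow_left₀ (abs_nonneg _) (abs_real_inner_le_norm x a) 2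

lemma Continuous.integrable_of_abs_le {X : Type*} [TopologicalSpace X] [MeasurableSpace X]
    [OpensMeasurableSpace X] {μ : Measure X} [IsFiniteMeasure μ] {u : X → ℝ} (hu : Continuous u)
    {b : ℝ} (hb : ∀ x, |u x| ≤ b) : Integrable u μ :=
  (integrable_const b).mono' hu.aestronglyMeasurable (.of_forall hb)

/-- The average of `u` over a centered Gaussian of standard deviation `τ` translated by `x`. -/
def gaussAvg {V : Type*} [NormedAddCommGroup V] [NormedSpace ℝ V] (τ : ℝ) (u : F → V) (x : F) : V :=
  ∫ y, u (x + τ • y) ∂(ProbabilityTheory.stdGaussian F)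

lemma continuous_gaussAvg {V : Type*} [NormedAddCommGroup V] [NormedSpace ℝ V]
    [FiniteDimensional ℝ V] {τ : ℝ} {u : F → V} (hu : Continuous u) {b : ℝ}
    (hb : ∀ x, ‖u x‖ ≤ b) : Continuous (gaussAvg τ u) := by
  have : ProperSpace V := FiniteDimensional.proper_real V
  refine continuous_of_dominated (bound := fun _ => b) (fun x => ?_)
    (fun x => .of_forall fun y => hb _) (integrable_const b) (.of_forall fun y => by fun_prop)
  exact (by fun_prop : Continuous fun y => u (x + τ • y)).aestronglyMeasurable

lemma map_add_smul_prod_stdGaussian {a b c : ℝ} (h : a ^ 2 + b ^ 2 = c ^ 2) :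
    ((ProbabilityTheory.stdGaussian F).prod (ProbabilityTheory.stdGaussian F)).map
      (fun p => a • p.1 + b • p.2) = (ProbabilityTheory.stdGaussian F).map (fun x => c • x) := by
  have hp : ∀ r : ℝ, IsProbabilityMeasure
      ((ProbabilityTheory.stdGaussian F).map (fun x => r • x)) := fun r =>
    Measure.isProbabilityMeasure_map (by fun_prop)
  have e : ((ProbabilityTheory.stdGaussian F).prod (ProbabilityTheory.stdGaussian F)).map
      (fun p => a • p.1 + b • p.2) = (((ProbabilityTheory.stdGaussian F).map (fun x => a • x)).prod
        ((ProbabilityTheory.stdGaussian F).map (fun x => b • x))).map (fun p => p.1 + p.2) := by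
    rw [Measure.map_prod_map _ _ (by fun_prop) (by fun_prop),
      Measure.map_map (by fun_prop) (by fun_prop)]
    rfl
  rw [e]
  have := hp a
  have := hp b
  have := hp c
  have : IsProbabilityMeasure ((((ProbabilityTheory.stdGaussian F).map (fun x => a • x)).prod
        ((ProbabilityTheory.stdGaussian F).map (fun x => b • x))).map (fun p => p.1 + p.2)) :=
    Measure.isProbabilityMeasure_map (by fun_prop)
  refine Measure.ext_of_charFun ?_
  rw [ProbabilityTheory.charFun_map_add_prod_eq_mul]
  ext t
  simp only [Pi.mul_apply, charFun_map_smul, ProbabilityTheory.charFun_stdGaussian, norm_smul,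
    ← Complex.exp_add]
  congr 1
  have h' : (a : ℂ) ^ 2 + (b : ℂ) ^ 2 = (c : ℂ) ^ 2 := by exact_mod_cast h
  have hn : ∀ r : ℝ, ((‖r‖ * ‖t‖ : ℝ) : ℂ) ^ 2 = (r : ℂ) ^ 2 * (‖t‖ : ℂ) ^ 2 := by
    intro r
    rw [← Complex.ofReal_pow, mul_pow, Real.norm_eq_abs, sq_abs]
    push_cast; ring
  rw [hn, hn, hn, ← h']
  ring

lemma gaussAvg_gaussAvg {a b c : ℝ} (h : a ^ 2 + b ^ 2 = c ^ 2) {u : F → ℝ} (hu : Continuous u)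
    {M : ℝ} (hM : ∀ x, |u x| ≤ M) : gaussAvg a (gaussAvg b u) = gaussAvg c u := by
  ext x
  have hm := map_add_smul_prod_stdGaussian (F := F) h
  have hc : Continuous fun z => u (x + z) := by fun_prop
  have e1 : gaussAvg c u x = ∫ z, u (x + z)
      ∂((ProbabilityTheory.stdGaussian F).map (fun x => c • x)) := by
    rw [integral_map (by fun_prop) hc.aestronglyMeasurable]; rfl
  rw [e1, ← hm, integral_map (by fun_prop) hc.aestronglyMeasurable, integral_prod]
  · simp only [gaussAvg, add_assoc]
  · exact Continuous.integrable_of_abs_le (by fun_prop) fun p => hM _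

lemma gaussAvg_iterate {u : F → ℝ} (hu : Continuous u) {M : ℝ} (hM : ∀ x, |u x| ≤ M)
    {τ : ℝ} (k : ℕ) : (gaussAvg τ)^[k] u = gaussAvg (√k * τ) u := by
  induction k with
  | zero => ext x; simp [gaussAvg]
  | succ k ih =>
    rw [Function.iterate_succ_apply', ih]
    refine gaussAvg_gaussAvg ?_ hu hM
    rw [mul_pow, mul_pow, Real.sq_sqrt (by positivity), Real.sq_sqrt (by positivity)]
    push_cast; ring

end GaussianAverages

section RegularFunctions

variable {F : Type*} [NormedAddCommGroup F] [InnerProductSpace ℝ F]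

/-- Continuous functions with values in `[a, b]` and a bounded gradient, with a uniform quadratic
bound on the first order Taylor remainder. -/
structure UniformC11 (a b L : ℝ) (u : F → ℝ) : Prop where
  cont : Continuous u
  lower : ∀ x, a ≤ u x
  upper : ∀ x, u x ≤ b
  exists_grad : ∃ w : F → F, Continuous w ∧ (∀ x, ‖w x‖ ≤ L) ∧
    ∀ x v, |u (x + v) - u x - inner ℝ v (w x)| ≤ L * ‖v‖ ^ 2

variable {a b L : ℝ} {u : F → ℝ}

lemma UniformC11.abs_le (ha : 0 ≤ a) (h : UniformC11 a b L u) (x : F) : |u x| ≤ b := by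
  rw [abs_of_nonneg (ha.trans (h.lower x))]; exact h.upper x

variable [FiniteDimensional ℝ F] [MeasurableSpace F] [BorelSpace F]

lemma integral_mem_Icc_of_mem_Icc {X : Type*} [MeasurableSpace X] {μ : Measure X}
    [IsProbabilityMeasure μ] {v : X → ℝ} (hv : Integrable v μ) {a b : ℝ} (ha : ∀ x, a ≤ v x)
    (hb : ∀ x, v x ≤ b) : a ≤ ∫ x, v x ∂μ ∧ ∫ x, v x ∂μ ≤ b := by
  constructor
  · simpa using integral_mono (μ := μ) (integrable_const a) hv ha
  · simpa using integral_mono (μ := μ) hv (integrable_const b) hb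

lemma UniformC11.integrable_shift (ha : 0 ≤ a) (h : UniformC11 a b L u) (τ : ℝ) (x : F) :
    Integrable (fun y => u (x + τ • y)) (ProbabilityTheory.stdGaussian F) :=
  have := h.cont
  Continuous.integrable_of_abs_le (by fun_prop) fun _ => h.abs_le ha _

lemma UniformC11.gaussAvg (ha : 0 ≤ a) (h : UniformC11 a b L u) (τ : ℝ) :
    UniformC11 a b L (gaussAvg τ u) := by
  have hI := h.integrable_shift ha τ
  obtain ⟨w, hwc, hwL, hw⟩ := h.exists_grad
  refine ⟨continuous_gaussAvg h.cont (h.abs_le ha),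
    fun x => (integral_mem_Icc_of_mem_Icc (hI x) (fun _ => h.lower _) fun _ => h.upper _).1,
    fun x => (integral_mem_Icc_of_mem_Icc (hI x) (fun _ => h.lower _) fun _ => h.upper _).2,
    _root_.gaussAvg τ w, continuous_gaussAvg hwc hwL, fun x => ?_, fun x v => ?_⟩
  · have := norm_integral_le_of_norm_le_const (μ := ProbabilityTheory.stdGaussian F)
      (f := fun y => w (x + τ • y)) (.of_forall fun y => hwL _)
    simpa [_root_.gaussAvg] using this
  · have hIw : Integrable (fun y => w (x + τ • y)) (ProbabilityTheory.stdGaussian F) :=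
      (integrable_const L).mono' (by fun_prop : Continuous _).aestronglyMeasurable
        (.of_forall fun y => hwL _)
    have e : _root_.gaussAvg τ u (x + v) - _root_.gaussAvg τ u x
        - inner ℝ v (_root_.gaussAvg τ w x)
        = ∫ y, (u (x + τ • y + v) - u (x + τ • y) - inner ℝ v (w (x + τ • y)))
          ∂(ProbabilityTheory.stdGaussian F) := by
      have h1 : Integrable (fun y => u (x + τ • y + v)) (ProbabilityTheory.stdGaussian F) := by
        simpa only [add_right_comm] using hI (x + v)
      have h2 := integral_sub (h1.sub (hI x)) (hIw.const_inner v)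
      have h3 := integral_sub h1 (hI x)
      simp only [Pi.sub_apply] at h2
      rw [h2, h3, integral_inner hIw]
      simp only [_root_.gaussAvg, add_right_comm]
    rw [e, ← Real.norm_eq_abs]
    have := norm_integral_le_of_norm_le_const (μ := ProbabilityTheory.stdGaussian F)
      (f := fun y => u (x + τ • y + v) - u (x + τ • y) - inner ℝ v (w (x + τ • y)))
      (.of_forall fun y => hw (x + τ • y) v)
    simpa using this

end RegularFunctions

section GeometricInequality

variable {ι : Type*} [Fintype ι] {E : Type*} [NormedAddCommGroup E] [InnerProductSpace ℝ E]
  [FiniteDimensional ℝ E] [MeasurableSpace E] [BorelSpace E]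
  {F : ι → Type*} [∀ i, NormedAddCommGroup (F i)] [∀ i, InnerProductSpace ℝ (F i)]
  [∀ i, FiniteDimensional ℝ (F i)] [∀ i, MeasurableSpace (F i)] [∀ i, BorelSpace (F i)]
  {B : ∀ i, E →L[ℝ] F i} {B' : ∀ i, F i → E} {c : ι → ℝ} {a b L : ℝ}

lemma integral_comp_shift_of_adjoint_isometry {F : Type*} [NormedAddCommGroup F]
    [InnerProductSpace ℝ F] [FiniteDimensional ℝ F] [MeasurableSpace F] [BorelSpace F]
    {B : E →L[ℝ] F} {B' : F → E} (hB : ∀ x w, inner ℝ (B x) w = inner ℝ x (B' w))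
    (hB' : ∀ w, ‖B' w‖ = ‖w‖) {u : F → ℝ} (hu : Continuous u) (τ : ℝ) (x : F) :
    ∫ g, u (x + τ • B g) ∂(ProbabilityTheory.stdGaussian E) = gaussAvg τ u x := by
  rw [gaussAvg, ← map_stdGaussian_of_adjoint_isometry B B' hB hB',
    integral_map B.continuous.aemeasurable (by fun_prop : Continuous _).aestronglyMeasurable]

/-- A single short-time step: up to a cubic error in `τ`, Gaussian averaging at scale `τ` may be
moved inside a weighted geometric mean. -/
lemma exists_gaussAvg_prod_rpow_le (hB : ∀ i x w, inner ℝ (B i x) w = inner ℝ x (B' i w))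
    (hB' : ∀ i w, ‖B' i w‖ = ‖w‖) (hc : ∀ i, 0 ≤ c i)
    (hBL : ∀ w : ∀ i, F i, ‖∑ i, c i • B' i (w i)‖ ^ 2 ≤ ∑ i, c i * ‖w i‖ ^ 2)
    (ha : 0 < a) (hab : a ≤ b) (hL : 0 ≤ L) :
    ∃ K : ℝ, 0 ≤ K ∧ ∀ τ : ℝ, 0 < τ → τ ≤ 1 → ∀ u : ∀ i, F i → ℝ,
      (∀ i, UniformC11 a b L (u i)) → ∀ x,
        gaussAvg τ (fun x => ∏ i, u i (B i x) ^ c i) x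
          ≤ (1 + K * τ ^ 3) * ∏ i, gaussAvg τ (u i) (B i x) ^ c i := by
  set m : ι → ℝ := fun i => ∫ y, ‖y‖ ^ 2 ∂(ProbabilityTheory.stdGaussian (F i)) with hm
  have hm0 : ∀ i, 0 ≤ m i := fun i => integral_nonneg fun y => by positivity
  set M : ℝ := 1 + b / a + L / a * (1 + ∑ i, m i) with hMdef
  have hb0 : 0 < b := ha.trans_le hab
  have hsm : 0 ≤ ∑ i, m i := Finset.sum_nonneg fun i _ => hm0 i
  have hLa : 0 ≤ L / a := by positivity
  have hba : 0 < b / a := by positivity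
  have hM1 : 1 ≤ M := by
    have := mul_nonneg hLa (by linarith : 0 ≤ 1 + ∑ i, m i)
    linarith
  obtain ⟨K0, hK0, hK⟩ := exists_prod_rpow_one_add_le hc hM1
  set J := ∫ g, (1 + ‖g‖) ^ 6 ∂(ProbabilityTheory.stdGaussian E) with hJ
  have hIJ : Integrable (fun g : E => (1 + ‖g‖) ^ 6) (ProbabilityTheory.stdGaussian E) := by
    have : (fun g : E => (1 + ‖g‖) ^ 6)
        = fun g => ∑ k ∈ Finset.range 7, ‖g‖ ^ k * (Nat.choose 6 k : ℝ) := by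
      ext g
      rw [add_comm, add_pow]
      exact Finset.sum_congr rfl fun k _ => by simp
    rw [this]
    exact integrable_finsetSum _ fun k _ => (integrable_norm_pow_stdGaussian k).mul_const _
  refine ⟨K0 * J, mul_nonneg hK0 (integral_nonneg fun g => by positivity), ?_⟩
  intro τ hτ hτ1 u hu x
  choose w hwc hwL hw using fun i => (hu i).exists_grad
  set U : ι → ℝ := fun i => gaussAvg τ (u i) (B i x) with hU
  have hUa : ∀ i, a ≤ U i := fun i => ((hu i).gaussAvg ha.le τ).lower _
  have hU0 : ∀ i, 0 < U i := fun i => ha.trans_le (hUa i)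
  set ω : ∀ i, F i := fun i => (U i)⁻¹ • w i (B i x) with hω
  set η : ι → E → ℝ := fun i g => u i (B i x + τ • B i g) / U i - 1 with hη
  set l : ι → E → ℝ := fun i g => inner ℝ g (B' i (ω i)) with hl
  have hl' : ∀ i g, l i g = (U i)⁻¹ * inner ℝ (B i g) (w i (B i x)) := fun i g => by
    rw [hl]; dsimp only; rw [← hB, hω, inner_smul_right]
  have hBn : ∀ i g, ‖B i g‖ ≤ ‖g‖ := fun i => norm_le_of_adjoint_isometry _ _ (hB i) (hB' i)
  have hwU : ∀ i, ‖ω i‖ ≤ L / a := fun i => by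
    rw [hω]; dsimp only
    rw [norm_smul, norm_inv, Real.norm_eq_abs, abs_of_pos (hU0 i), inv_mul_eq_div]
    exact div_le_div₀ hL (hwL i _) ha (hUa i)
  have hUu : ∀ i, |U i - u i (B i x)| ≤ L * τ ^ 2 * m i := by
    intro i
    have hI := (hu i).integrable_shift ha.le τ (B i x)
    have hI2 := (integrable_inner_stdGaussian (w i (B i x))).const_mul τ
    have e : U i - u i (B i x) = ∫ y, (u i (B i x + τ • y) - u i (B i x)
        - τ * inner ℝ y (w i (B i x))) ∂(ProbabilityTheory.stdGaussian (F i)) := by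
      have h2 := integral_sub (hI.sub (integrable_const (u i (B i x)))) hI2
      have h3 := integral_sub hI (integrable_const (u i (B i x)))
      simp only [Pi.sub_apply] at h2
      rw [h2, h3, integral_const_mul, integral_inner_stdGaussian]
      simp [hU, gaussAvg]
    rw [e, ← Real.norm_eq_abs, hm, ← integral_const_mul]
    refine norm_integral_le_of_norm_le ((integrable_norm_pow_stdGaussian 2).const_mul _)
      (.of_forall fun y => ?_)
    have := hw i (B i x) (τ • y)
    rw [inner_smul_left, norm_smul, mul_pow, Real.norm_eq_abs, sq_abs] at this
    simpa [mul_assoc] using this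
  have hpt : ∀ g, ∏ i, (1 + η i g) ^ c i ≤ 1 + ∑ i, c i * η i g
      + τ ^ 2 / 2 * ((∑ i, c i * l i g) ^ 2 - ∑ i, c i * l i g ^ 2)
      + K0 * τ ^ 3 * (1 + ‖g‖) ^ 6 := by
    intro g
    have hg : 1 ≤ 1 + ‖g‖ := by linarith [norm_nonneg g]
    have hr : ∀ i, 0 < u i (B i x + τ • B i g) / U i := fun i =>
      div_pos (ha.trans_le ((hu i).lower _)) (hU0 i)
    refine hK (fun i => η i g) (fun i => l i g) τ (1 + ‖g‖) hτ hτ1 hg (fun i => ?_) (fun i => ?_)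
      (fun i => ?_) fun i => ?_
    · simp only [hη]; linarith [hr i]
    · have h1 : u i (B i x + τ • B i g) / U i ≤ b / a :=
        div_le_div₀ hb0.le ((hu i).upper _) ha (hUa i)
      have := mul_nonneg hLa (by linarith : 0 ≤ 1 + ∑ i, m i)
      simp only [hη]
      rw [abs_le]
      constructor <;> linarith [hr i]
    · have h1 := abs_real_inner_le_norm g (B' i (ω i))
      rw [hB'] at h1
      have h2 : L / a ≤ M := by nlinarith
      calc |l i g| ≤ ‖g‖ * ‖ω i‖ := h1
        _ ≤ (1 + ‖g‖) * M := mul_le_mul (by linarith) ((hwU i).trans h2) (norm_nonneg _)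
            (by linarith)
        _ = _ := mul_comm _ _
    · have e : η i g - τ * l i g = (u i (B i x + τ • B i g) - u i (B i x)
          - inner ℝ (τ • B i g) (w i (B i x)) - (U i - u i (B i x))) / U i := by
        rw [hl', inner_smul_left]
        simp only [hη, conj_trivial]
        have := (hU0 i).ne'
        field_simp
        ring
      have h1 := hw i (B i x) (τ • B i g)
      rw [norm_smul, mul_pow, Real.norm_eq_abs, sq_abs] at h1
      have h2 : ‖B i g‖ ^ 2 ≤ (1 + ‖g‖) ^ 2 :=
        pow_le_pow_left₀ (norm_nonneg _) ((hBn i g).trans (by linarith)) 2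
      have h3 : m i ≤ (∑ i, m i) * (1 + ‖g‖) ^ 2 :=
        (Finset.single_le_sum (fun i _ => hm0 i) (Finset.mem_univ i)).trans
          (le_mul_of_one_le_right hsm (by nlinarith))
      rw [e, abs_div, abs_of_pos (hU0 i)]
      have h4 : |u i (B i x + τ • B i g) - u i (B i x)
          - inner ℝ (τ • B i g) (w i (B i x)) - (U i - u i (B i x))|
          ≤ L * (1 + ∑ i, m i) * (τ ^ 2 * (1 + ‖g‖) ^ 2) := by
        refine (abs_sub _ _).trans ((add_le_add h1 (hUu i)).trans ?_)
        have hτL : 0 ≤ L * τ ^ 2 := by positivity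
        nlinarith [mul_le_mul_of_nonneg_left h2 hτL, mul_le_mul_of_nonneg_left h3 hτL]
      calc _ ≤ L * (1 + ∑ i, m i) * (τ ^ 2 * (1 + ‖g‖) ^ 2) / a :=
            div_le_div₀ (by positivity) h4 ha (hUa i)
        _ = (L / a * (1 + ∑ i, m i)) * (τ ^ 2 * (1 + ‖g‖) ^ 2) := by ring
        _ ≤ M * (τ ^ 2 * (1 + ‖g‖) ^ 2) :=
            mul_le_mul_of_nonneg_right (by linarith) (by positivity)
        _ = _ := by ring
  have hIu : ∀ i, Integrable (fun g => u i (B i x + τ • B i g)) (ProbabilityTheory.stdGaussian E) :=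
    fun i => by
      have := (hu i).cont
      exact Continuous.integrable_of_abs_le (by fun_prop) fun _ => (hu i).abs_le ha.le _
  have hIη : ∀ i, Integrable (η i) (ProbabilityTheory.stdGaussian E) := fun i =>
    ((hIu i).div_const _).sub (integrable_const 1)
  have hη0 : ∀ i, ∫ g, η i g ∂(ProbabilityTheory.stdGaussian E) = 0 := fun i => by
    simp only [hη]
    rw [integral_sub ((hIu i).div_const _) (integrable_const 1), integral_div,
      integral_comp_shift_of_adjoint_isometry (hB i) (hB' i) (hu i).cont]
    have : gaussAvg τ (u i) (B i x) / U i = 1 := div_self (hU0 i).ne'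
    simp [this]
  have hsuml : ∀ g, ∑ i, c i * l i g = inner ℝ g (∑ i, c i • B' i (ω i)) := fun g => by
    rw [inner_sum]
    exact Finset.sum_congr rfl fun i _ => by rw [inner_smul_right]
  have hprod : ∀ g, ∏ i, u i (B i (x + τ • g)) ^ c i
      = (∏ i, U i ^ c i) * ∏ i, (1 + η i g) ^ c i := fun g => by
    rw [← Finset.prod_mul_distrib]
    refine Finset.prod_congr rfl fun i _ => ?_
    have : 0 ≤ 1 + η i g := by
      have := div_pos (ha.trans_le ((hu i).lower (B i x + τ • B i g))) (hU0 i)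
      simp only [hη]; linarith
    rw [← Real.mul_rpow (hU0 i).le this]
    congr 1
    simp only [hη, map_add, map_smul]
    field_simp [(hU0 i).ne']
    ring
  have hmain : ∫ g, ∏ i, (1 + η i g) ^ c i ∂(ProbabilityTheory.stdGaussian E)
      ≤ 1 + K0 * J * τ ^ 3 := by
    have hI1 : Integrable (fun g => ∑ i, c i * η i g) (ProbabilityTheory.stdGaussian E) :=
      integrable_finsetSum _ fun i _ => (hIη i).const_mul _
    have hI2 : Integrable (fun g => (∑ i, c i * l i g) ^ 2) (ProbabilityTheory.stdGaussian E) := by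
      simp_rw [hsuml]; exact integrable_inner_sq_stdGaussian _
    have hI3 : Integrable (fun g => ∑ i, c i * l i g ^ 2) (ProbabilityTheory.stdGaussian E) :=
      integrable_finsetSum _ fun i _ => (integrable_inner_sq_stdGaussian _).const_mul _
    have hI4 := (hI2.sub hI3).const_mul (τ ^ 2 / 2)
    have hI5 := hIJ.const_mul (K0 * τ ^ 3)
    have hI6 := (integrable_const (μ := ProbabilityTheory.stdGaussian E) (1 : ℝ)).add hI1
    have v1 := integral_add (hI6.add hI4) hI5
    have v2 := integral_add hI6 hI4
    have v3 := integral_add (integrable_const (μ := ProbabilityTheory.stdGaussian E) (1 : ℝ)) hI1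
    have v4 : ∫ g, ∑ i, c i * η i g ∂(ProbabilityTheory.stdGaussian E) = 0 := by
      rw [integral_finsetSum _ fun i _ => (hIη i).const_mul _]
      simp [integral_const_mul, hη0]
    have v5 := integral_sub hI2 hI3
    have v6 : ∫ g, (∑ i, c i * l i g) ^ 2 ∂(ProbabilityTheory.stdGaussian E)
        = ‖∑ i, c i • B' i (ω i)‖ ^ 2 := by
      simp_rw [hsuml]; exact integral_inner_sq_stdGaussian _
    have v7 : ∫ g, ∑ i, c i * l i g ^ 2 ∂(ProbabilityTheory.stdGaussian E)
        = ∑ i, c i * ‖ω i‖ ^ 2 := by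
      rw [integral_finsetSum _ fun i _ => (integrable_inner_sq_stdGaussian _).const_mul _]
      simp [integral_const_mul, integral_inner_sq_stdGaussian, hB']
    simp only [Pi.add_apply, Pi.sub_apply, integral_const_mul] at v1 v2 v3 v5
    have hle := integral_mono_of_nonneg (μ := ProbabilityTheory.stdGaussian E)
      (.of_forall fun g => Finset.prod_nonneg fun i _ => Real.rpow_nonneg (by
        have := div_pos (ha.trans_le ((hu i).lower (B i x + τ • B i g))) (hU0 i)
        simp only [hη]; linarith) _) ((hI6.add hI4).add hI5) (.of_forall hpt)
    simp only [Pi.add_apply, Pi.sub_apply] at hle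
    rw [v1, v2, v3, v4, v5, v6, v7] at hle
    simp only [integral_const, probReal_univ, smul_eq_mul, mul_one] at hle
    have := mul_nonneg (by positivity : 0 ≤ τ ^ 2 / 2) (sub_nonneg.2 (hBL ω))
    nlinarith
  rw [gaussAvg]
  simp_rw [hprod]
  rw [integral_const_mul, mul_comm]
  exact mul_le_mul_of_nonneg_right hmain (Finset.prod_nonneg fun i _ =>
    Real.rpow_nonneg (hU0 i).le _)

/-- The geometric Brascamp–Lieb inequality for the Gaussian measure and regular functions. -/
lemma integral_prod_rpow_le_of_uniformC11
    (hB : ∀ i x w, inner ℝ (B i x) w = inner ℝ x (B' i w))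
    (hB' : ∀ i w, ‖B' i w‖ = ‖w‖) (hc : ∀ i, 0 ≤ c i)
    (hBL : ∀ w : ∀ i, F i, ‖∑ i, c i • B' i (w i)‖ ^ 2 ≤ ∑ i, c i * ‖w i‖ ^ 2)
    (ha : 0 < a) (hab : a ≤ b) (hL : 0 ≤ L) {u : ∀ i, F i → ℝ}
    (hu : ∀ i, UniformC11 a b L (u i)) :
    ∫ g, ∏ i, u i (B i g) ^ c i ∂(ProbabilityTheory.stdGaussian E)
      ≤ ∏ i, (∫ y, u i y ∂(ProbabilityTheory.stdGaussian (F i))) ^ c i := by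
  obtain ⟨K, hK0, hK⟩ := exists_gaussAvg_prod_rpow_le hB hB' hc hBL ha hab hL
  have hgood : ∀ (τ : ℝ) (k : ℕ) i, UniformC11 a b L ((gaussAvg τ)^[k] (u i)) := by
    intro τ k i
    induction k with
    | zero => exact hu i
    | succ k ih => rw [Function.iterate_succ_apply']; exact ih.gaussAvg ha.le τ
  have hcontΦ : ∀ v : ∀ i, F i → ℝ, (∀ i, UniformC11 a b L (v i)) →
      Continuous fun x => ∏ i, v i (B i x) ^ c i := fun v hv =>
    continuous_finsetProd _ fun i _ => ((hv i).cont.comp (B i).continuous).rpow_const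
      fun x => Or.inr (hc i)
  have hnnΦ : ∀ v : ∀ i, F i → ℝ, (∀ i, UniformC11 a b L (v i)) → ∀ x,
      0 ≤ ∏ i, v i (B i x) ^ c i := fun v hv x =>
    Finset.prod_nonneg fun i _ => Real.rpow_nonneg (ha.le.trans ((hv i).lower _)) _
  have hbdΦ : ∀ v : ∀ i, F i → ℝ, (∀ i, UniformC11 a b L (v i)) → ∀ x,
      |∏ i, v i (B i x) ^ c i| ≤ ∏ i, b ^ c i := fun v hv x => by
    rw [abs_of_nonneg (hnnΦ v hv x)]
    exact Finset.prod_le_prod (fun i _ => Real.rpow_nonneg (ha.le.trans ((hv i).lower _)) _)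
      fun i _ => Real.rpow_le_rpow (ha.le.trans ((hv i).lower _)) ((hv i).upper _) (hc i)
  have hiter : ∀ τ : ℝ, 0 < τ → τ ≤ 1 → ∀ (k : ℕ) x,
      (gaussAvg τ)^[k] (fun x => ∏ i, u i (B i x) ^ c i) x
        ≤ (1 + K * τ ^ 3) ^ k * ∏ i, ((gaussAvg τ)^[k] (u i)) (B i x) ^ c i := by
    intro τ hτ hτ1 k
    induction k with
    | zero => intro x; simp
    | succ k ih =>
      intro x
      simp only [Function.iterate_succ_apply']
      have hA : 0 ≤ (1 + K * τ ^ 3) ^ k := by positivity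
      have h1 : gaussAvg τ ((gaussAvg τ)^[k] (fun x => ∏ i, u i (B i x) ^ c i)) x
          ≤ (1 + K * τ ^ 3) ^ k
            * gaussAvg τ (fun x => ∏ i, ((gaussAvg τ)^[k] (u i)) (B i x) ^ c i) x := by
        rw [gaussAvg, gaussAvg, ← integral_const_mul]
        refine integral_mono_of_nonneg (.of_forall fun y => ?_) (Integrable.const_mul ?_ _)
          (.of_forall fun y => ih _)
        · simp only [gaussAvg_iterate (hcontΦ u hu) (hbdΦ u hu)]
          exact integral_nonneg fun z => hnnΦ u hu _
        · exact Continuous.integrable_of_abs_le ((hcontΦ _ (hgood τ k)).comp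
            (by fun_prop : Continuous fun y => x + τ • y)) fun y => hbdΦ _ (hgood τ k) _
      refine h1.trans ?_
      rw [pow_succ (1 + K * τ ^ 3) k, mul_assoc]
      exact mul_le_mul_of_nonneg_left (hK τ hτ hτ1 _ (hgood τ k) x) hA
  have hscale : ∀ N : ℕ, √((N + 1 : ℕ) : ℝ) * (√((N + 1 : ℕ) : ℝ))⁻¹ = 1 := fun N =>
    mul_inv_cancel₀ (Real.sqrt_pos.2 (by positivity)).ne'
  have hN : ∀ N : ℕ, ∫ g, ∏ i, u i (B i g) ^ c i ∂(ProbabilityTheory.stdGaussian E)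
      ≤ Real.exp (K * (√((N + 1 : ℕ) : ℝ))⁻¹)
        * ∏ i, (∫ y, u i y ∂(ProbabilityTheory.stdGaussian (F i))) ^ c i := by
    intro N
    have hs : 0 < √((N + 1 : ℕ) : ℝ) := Real.sqrt_pos.2 (by positivity)
    have hs1 : 1 ≤ √((N + 1 : ℕ) : ℝ) := Real.one_le_sqrt.2 (by
      push_cast; linarith [N.cast_nonneg (α := ℝ)])
    have h := hiter (√((N + 1 : ℕ) : ℝ))⁻¹ (inv_pos.2 hs) (inv_le_one_of_one_le₀ hs1) (N + 1) 0
    rw [gaussAvg_iterate (hcontΦ u hu) (hbdΦ u hu), hscale] at h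
    have e : ∀ i, (gaussAvg (√((N + 1 : ℕ) : ℝ))⁻¹)^[N + 1] (u i) (B i 0)
        = ∫ y, u i y ∂(ProbabilityTheory.stdGaussian (F i)) := fun i => by
      rw [gaussAvg_iterate (hu i).cont ((hu i).abs_le ha.le), hscale]
      simp [gaussAvg]
    simp only [e] at h
    simp only [gaussAvg, zero_add, one_smul] at h
    refine h.trans (mul_le_mul_of_nonneg_right ?_ (Finset.prod_nonneg fun i _ =>
      Real.rpow_nonneg (integral_nonneg fun y => ha.le.trans ((hu i).lower y)) _))
    have h2 : (1 + K * (√((N + 1 : ℕ) : ℝ))⁻¹ ^ 3)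
        ≤ Real.exp (K * (√((N + 1 : ℕ) : ℝ))⁻¹ ^ 3) := by
      rw [add_comm]; exact Real.add_one_le_exp _
    refine (pow_le_pow_left₀ (by positivity) h2 (N + 1)).trans_eq ?_
    rw [← Real.exp_nat_mul]
    congr 1
    have h3 : ((N + 1 : ℕ) : ℝ) = √((N + 1 : ℕ) : ℝ) ^ 2 := (Real.sq_sqrt (by positivity)).symm
    generalize √((N + 1 : ℕ) : ℝ) = r at hs h3
    rw [h3]
    field_simp
  have hlim : Filter.Tendsto (fun N : ℕ => Real.exp (K * (√((N + 1 : ℕ) : ℝ))⁻¹)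
        * ∏ i, (∫ y, u i y ∂(ProbabilityTheory.stdGaussian (F i))) ^ c i) Filter.atTop
      (nhds (1 * ∏ i, (∫ y, u i y ∂(ProbabilityTheory.stdGaussian (F i))) ^ c i)) := by
    refine Filter.Tendsto.mul_const _ ?_
    have h1 : Filter.Tendsto (fun N : ℕ => (√((N + 1 : ℕ) : ℝ))⁻¹) Filter.atTop (nhds 0) :=
      tendsto_inv_atTop_zero.comp (Real.tendsto_sqrt_atTop.comp
        (tendsto_natCast_atTop_atTop.comp (Filter.tendsto_add_atTop_nat 1)))
    have h2 := (Real.continuous_exp.tendsto _).comp (h1.const_mul K)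
    rw [mul_zero, Real.exp_zero] at h2
    exact h2
  rw [one_mul] at hlim
  exact ge_of_tendsto hlim (.of_forall hN)

end GeometricInequality

section Approximation

lemma UniformC11.mono {F : Type*} [NormedAddCommGroup F] [InnerProductSpace ℝ F]
    {a b b' L L' : ℝ} {u : F → ℝ} (h : UniformC11 a b L u) (hb : b ≤ b') (hL : L ≤ L') :
    UniformC11 a b' L' u := by
  obtain ⟨w, hw, hwL, hT⟩ := h.exists_grad
  exact ⟨h.cont, h.lower, fun x => (h.upper x).trans hb, w, hw, fun x => (hwL x).trans hL,
    fun x v => (hT x v).trans (mul_le_mul_of_nonneg_right hL (by positivity))⟩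

variable {F : Type*} [NormedAddCommGroup F] [InnerProductSpace ℝ F] [FiniteDimensional ℝ F]

lemma exists_uniformC11_add_const {g : F → ℝ} (hg : ContDiff ℝ 2 g) (hgs : HasCompactSupport g)
    (t : ℝ) {a : ℝ} (ha : ∀ x, a ≤ g x + t) :
    ∃ b L, 0 ≤ L ∧ UniformC11 a b L fun x => g x + t := by
  obtain ⟨b, hb⟩ := hgs.exists_bound_of_continuous hg.continuous
  have hd : ContDiff ℝ 1 (fderiv ℝ g) := hg.fderiv_right (by norm_num)
  obtain ⟨L₁, hL₁⟩ := (hgs.fderiv ℝ).exists_bound_of_continuous hd.continuous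
  obtain ⟨L₂, hL₂⟩ := hd.lipschitzWith_of_hasCompactSupport (hgs.fderiv ℝ) one_ne_zero
  refine ⟨b + t, max L₁ L₂, le_max_of_le_right L₂.2, by have := hg.continuous; fun_prop, ha,
    fun x => by linarith [(le_abs_self _).trans (hb x)],
    fun x => (InnerProductSpace.toDual ℝ F).symm (fderiv ℝ g x), ?_, fun x => ?_, fun x v => ?_⟩
  · exact (InnerProductSpace.toDual ℝ F).symm.continuous.comp hd.continuous
  · rw [LinearIsometryEquiv.norm_map]
    exact (hL₁ x).trans (le_max_left _ _)
  · rw [real_inner_comm, InnerProductSpace.toDual_symm_apply]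
    have h := (convex_segment x (x + v)).norm_image_sub_le_of_norm_hasFDerivWithin_le'
      (f := g) (f' := fderiv ℝ g) (φ := fderiv ℝ g x) (C := L₂ * ‖v‖)
      (fun y _ => (hg.differentiable (by norm_num) y).hasFDerivAt.hasFDerivWithinAt)
      (fun y hy => ?_) (left_mem_segment ℝ x (x + v)) (right_mem_segment ℝ x (x + v))
    · rw [add_sub_cancel_left, Real.norm_eq_abs] at h
      rw [add_sub_add_right_eq_sub]
      refine h.trans ?_
      rw [mul_assoc, ← sq]
      exact mul_le_mul_of_nonneg_right (le_max_right _ _) (by positivity)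
    · refine (hL₂.norm_sub_le y x).trans (mul_le_mul_of_nonneg_left ?_ L₂.2)
      obtain ⟨θ, hθ, rfl⟩ := (segment_eq_image' ℝ x (x + v)).subset hy
      rw [add_sub_cancel_left, add_sub_cancel_left, norm_smul, Real.norm_eq_abs,
        abs_of_nonneg hθ.1]
      exact mul_le_of_le_one_left (norm_nonneg _) hθ.2

lemma exists_uniformC11_approx {f : F → ℝ} (hf : Continuous f) (hf0 : ∀ x, 0 ≤ f x) {ε : ℝ}
    (hε : 0 < ε) (R : ℝ) :
    ∃ (b L : ℝ) (g : F → ℝ), 0 ≤ L ∧ UniformC11 ε b L g ∧ (∀ x, g x ≤ f x + 3 * ε) ∧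
      ∀ x, ‖x‖ ≤ R → |g x - f x| ≤ 3 * ε := by
  set χ : F → ℝ := fun x => max 0 (min 1 (R + 1 - ‖x‖)) with hχ
  have hχc : Continuous χ := by fun_prop
  have hχ0 : ∀ x, 0 ≤ χ x := fun x => le_max_left _ _
  have hχ1 : ∀ x, χ x ≤ 1 := fun x => max_le zero_le_one (min_le_left _ _)
  have hcs : HasCompactSupport fun x => χ x * f x := by
    refine HasCompactSupport.intro (isCompact_closedBall (0 : F) (R + 1)) fun x hx => ?_
    rw [Metric.mem_closedBall, dist_zero_right, not_le] at hx
    have : χ x = 0 := max_eq_left ((min_le_right _ _).trans (by linarith))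
    rw [this, zero_mul]
  obtain ⟨g, hg, hgf, hgs⟩ := (hχc.mul hf).exists_contDiff_approx 2
    (ε := fun _ => ε) continuous_const fun _ => hε
  have hgf' : ∀ x, |g x - χ x * f x| < ε := hgf
  have hχf : ∀ x, 0 ≤ χ x * f x := fun x => mul_nonneg (hχ0 x) (hf0 x)
  have hχf' : ∀ x, χ x * f x ≤ f x := fun x => mul_le_of_le_one_left (hf0 x) (hχ1 x)
  obtain ⟨b, L, hL, h⟩ := exists_uniformC11_add_const hg (hcs.mono hgs) (2 * ε) (a := ε)
    fun x => by linarith [(abs_lt.1 (hgf' x)).1, hχf x]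
  refine ⟨b, L, _, hL, h, fun x => by linarith [(abs_lt.1 (hgf' x)).2, hχf' x], fun x hx => ?_⟩
  have : χ x = 1 := by
    simp only [hχ]
    rw [min_eq_left (by linarith), max_eq_right zero_le_one]
  have h1 := abs_lt.1 (hgf' x)
  rw [this, one_mul] at h1
  rw [abs_le]
  constructor <;> linarith

/-- A version of Fatou's lemma for real functions and convergent upper bounds. -/
lemma lintegral_ofReal_le_of_tendsto {X : Type*} [MeasurableSpace X] {μ : Measure X}
    {φ : ℕ → X → ℝ} {ψ : X → ℝ} {r : ℕ → ℝ} {s : ℝ} (hφ : ∀ k, Measurable (φ k))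
    (hlim : ∀ x, Filter.Tendsto (fun k => φ k x) Filter.atTop (nhds (ψ x)))
    (hr : Filter.Tendsto r Filter.atTop (nhds s))
    (hle : ∀ᶠ k in Filter.atTop, ∫⁻ x, ENNReal.ofReal (φ k x) ∂μ ≤ ENNReal.ofReal (r k)) :
    ∫⁻ x, ENNReal.ofReal (ψ x) ∂μ ≤ ENNReal.ofReal s := by
  have h1 : ∀ x, Filter.liminf (fun k => ENNReal.ofReal (φ k x)) Filter.atTop
      = ENNReal.ofReal (ψ x) := fun x =>
    ((ENNReal.continuous_ofReal.tendsto _).comp (hlim x)).liminf_eq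
  have h2 : Filter.liminf (fun k => ENNReal.ofReal (r k)) Filter.atTop = ENNReal.ofReal s :=
    ((ENNReal.continuous_ofReal.tendsto _).comp hr).liminf_eq
  rw [← h2]
  simp_rw [← h1]
  exact (lintegral_liminf_le fun k => (hφ k).ennreal_ofReal).trans (Filter.liminf_le_liminf hle)

end Approximation

section ContinuousFunctions

variable {ι : Type*} [Fintype ι] {E : Type*} [NormedAddCommGroup E] [InnerProductSpace ℝ E]
  [FiniteDimensional ℝ E] [MeasurableSpace E] [BorelSpace E]
  {F : ι → Type*} [∀ i, NormedAddCommGroup (F i)] [∀ i, InnerProductSpace ℝ (F i)]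
  [∀ i, FiniteDimensional ℝ (F i)] [∀ i, MeasurableSpace (F i)] [∀ i, BorelSpace (F i)]
  {B : ∀ i, E →L[ℝ] F i} {B' : ∀ i, F i → E} {c : ι → ℝ}

/-- The geometric Brascamp–Lieb inequality for the Gaussian measure. -/
lemma lintegral_prod_rpow_le_of_adjoint_isometry
    (hB : ∀ i x w, inner ℝ (B i x) w = inner ℝ x (B' i w))
    (hB' : ∀ i w, ‖B' i w‖ = ‖w‖) (hc : ∀ i, 0 ≤ c i)
    (hBL : ∀ w : ∀ i, F i, ‖∑ i, c i • B' i (w i)‖ ^ 2 ≤ ∑ i, c i * ‖w i‖ ^ 2)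
    {f : ∀ i, F i → ℝ} (hf : ∀ i, Continuous (f i)) (hf0 : ∀ i x, 0 ≤ f i x)
    (hfi : ∀ i, Integrable (f i) (ProbabilityTheory.stdGaussian (F i))) :
    ∫⁻ g, ENNReal.ofReal (∏ i, f i (B i g) ^ c i) ∂(ProbabilityTheory.stdGaussian E)
      ≤ ENNReal.ofReal (∏ i, (∫ y, f i y ∂(ProbabilityTheory.stdGaussian (F i))) ^ c i) := by
  set ε : ℕ → ℝ := fun k => 1 / ((k : ℝ) + 1) with hε
  have hε0 : ∀ k, 0 < ε k := fun k => by positivity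
  have hεlim : Filter.Tendsto ε Filter.atTop (nhds 0) := tendsto_one_div_add_atTop_nhds_zero_nat
  choose b L u hL hu hule hunear using fun (k : ℕ) i =>
    exists_uniformC11_approx (hf i) (hf0 i) (hε0 k) k
  have hu0 : ∀ k i x, 0 ≤ u k i x := fun k i x => (hε0 k).le.trans ((hu k i).lower x)
  have hcont : ∀ k, Continuous fun g => ∏ i, u k i (B i g) ^ c i := fun k =>
    continuous_finsetProd _ fun i _ => ((hu k i).cont.comp (B i).continuous).rpow_const
      fun x => Or.inr (hc i)
  have hulim : ∀ i y, Filter.Tendsto (fun k => u k i y) Filter.atTop (nhds (f i y)) := by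
    intro i y
    rw [tendsto_iff_dist_tendsto_zero]
    refine squeeze_zero' (.of_forall fun k => dist_nonneg) ?_
      (by simpa using hεlim.const_mul 3)
    obtain ⟨k₀, hk₀⟩ := exists_nat_ge ‖y‖
    filter_upwards [Filter.eventually_ge_atTop k₀] with k hk
    exact hunear k i y (hk₀.trans (by exact_mod_cast hk))
  refine lintegral_ofReal_le_of_tendsto
    (φ := fun k g => ∏ i, u k i (B i g) ^ c i)
    (r := fun k => ∏ i, ((∫ y, f i y ∂(ProbabilityTheory.stdGaussian (F i))) + 3 * ε k) ^ c i)
    (fun k => (hcont k).measurable)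
    (fun g => tendsto_finsetProd _ fun i _ => (hulim i _).rpow_const (Or.inr (hc i))) ?_
    (.of_forall fun k => ?_)
  · refine tendsto_finsetProd _ fun i _ => Filter.Tendsto.rpow_const ?_ (Or.inr (hc i))
    simpa using (hεlim.const_mul 3).const_add _
  · set b' := ε k + ∑ i, |b k i|
    set L' := ∑ i, L k i
    have hgood : ∀ i, UniformC11 (ε k) b' L' (u k i) := fun i => (hu k i).mono
      (by
        have := Finset.single_le_sum (f := fun i => |b k i|) (fun i _ => abs_nonneg _)
          (Finset.mem_univ i)
        linarith [le_abs_self (b k i), hε0 k])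
      (Finset.single_le_sum (fun i _ => hL k i) (Finset.mem_univ i))
    have h1 := integral_prod_rpow_le_of_uniformC11 hB hB' hc hBL (hε0 k)
      (le_add_of_nonneg_right (Finset.sum_nonneg fun i _ => abs_nonneg _))
      (Finset.sum_nonneg fun i _ => hL k i) hgood
    have hnn : ∀ g, 0 ≤ ∏ i, u k i (B i g) ^ c i := fun g =>
      Finset.prod_nonneg fun i _ => Real.rpow_nonneg (hu0 k i _) _
    rw [← ofReal_integral_eq_lintegral_ofReal _ (.of_forall hnn)]
    · refine ENNReal.ofReal_le_ofReal (h1.trans (Finset.prod_le_prod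
        (fun i _ => Real.rpow_nonneg (integral_nonneg (hu0 k i)) _) fun i _ =>
          Real.rpow_le_rpow (integral_nonneg (hu0 k i)) ?_ (hc i)))
      have := integral_mono_of_nonneg (.of_forall (hu0 k i))
        ((hfi i).add (integrable_const (3 * ε k))) (.of_forall (hule k i))
      simp only [Pi.add_apply] at this
      rw [integral_add (hfi i) (integrable_const _)] at this
      simpa using this
    · refine Continuous.integrable_of_abs_le (hcont k) (b := ∏ i, b' ^ c i) fun g => ?_
      rw [abs_of_nonneg (hnn g)]
      exact Finset.prod_le_prod (fun i _ => Real.rpow_nonneg (hu0 k i _) _) fun i _ =>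
        Real.rpow_le_rpow (hu0 k i _) ((hgood i).upper _) (hc i)

end ContinuousFunctions

section NoiseMaps

variable {X Z : Type*} [NormedAddCommGroup X] [InnerProductSpace ℝ X]
  [NormedAddCommGroup Z] [InnerProductSpace ℝ Z] {ι : Type*} {F : ι → Type*}
  [∀ i, NormedAddCommGroup (F i)] [∀ i, InnerProductSpace ℝ (F i)]

/-- The reflection `(x, z) ↦ (x, -z)`. -/
def reflectSnd (X Z : Type*) [NormedAddCommGroup X] [InnerProductSpace ℝ X]
    [NormedAddCommGroup Z] [InnerProductSpace ℝ Z] : WithLp 2 (X × Z) →L[ℝ] WithLp 2 (X × Z) :=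
  (WithLp.prodContinuousLinearEquiv 2 ℝ X Z).symm.toContinuousLinearMap.comp
    ((WithLp.fstL 2 ℝ X Z).prod (-WithLp.sndL 2 ℝ X Z))

lemma reflectSnd_apply (g : WithLp 2 (X × Z)) :
    reflectSnd X Z g = WithLp.toLp 2 (g.fst, -g.snd) := rfl

/-- The map `(x, z) ↦ C i x + A i (z (i, k))`. -/
def noiseMap (C : ∀ i, X →L[ℝ] F i) (A : ∀ i, F i →L[ℝ] F i) (K : ℕ) (j : ι × Fin K) :
    WithLp 2 (X × PiLp 2 fun j : ι × Fin K => F j.1) →L[ℝ] F j.1 :=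
  (C j.1).comp (WithLp.fstL 2 ℝ _ _)
    + (A j.1).comp ((PiLp.proj 2 (fun j : ι × Fin K => F j.1) j).comp (WithLp.sndL 2 ℝ _ _))

lemma noiseMap_apply (C : ∀ i, X →L[ℝ] F i) (A : ∀ i, F i →L[ℝ] F i) (K : ℕ) (j : ι × Fin K)
    (g : WithLp 2 (X × PiLp 2 fun j : ι × Fin K => F j.1)) :
    noiseMap C A K j g = C j.1 g.fst + A j.1 (g.snd j) := rfl

lemma norm_sum_sq_le_card_mul {κ V : Type*} [Fintype κ] [SeminormedAddCommGroup V] (w : κ → V) :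
    ‖∑ k, w k‖ ^ 2 ≤ Fintype.card κ * ∑ k, ‖w k‖ ^ 2 :=
  (pow_le_pow_left₀ (norm_nonneg _) (norm_sum_le _ _) 2).trans sq_sum_le_card_mul_sum_sq

lemma mul_norm_smul_sum_sq_le {V : Type*} [NormedAddCommGroup V] [InnerProductSpace ℝ V] {q θ : ℝ}
    (hq : 0 ≤ q) {K : ℕ} (hK : 0 < K) (hθ : 0 ≤ θ) (w : Fin K → V) :
    q * ‖(θ / K) • ∑ k, w k‖ ^ 2 ≤ θ * ∑ k, θ * q / K * ‖w k‖ ^ 2 := by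
  have hK' : (0 : ℝ) < K := by exact_mod_cast hK
  have h := norm_sum_sq_le_card_mul w
  rw [Fintype.card_fin] at h
  rw [norm_smul, mul_pow, Real.norm_of_nonneg (by positivity)]
  calc q * ((θ / K) ^ 2 * ‖∑ k, w k‖ ^ 2)
      ≤ q * ((θ / K) ^ 2 * (K * ∑ k, ‖w k‖ ^ 2)) := by gcongr
    _ = θ * ∑ k, θ * q / K * ‖w k‖ ^ 2 := by rw [← Finset.mul_sum]; field_simp

/-- The block condition for the family of maps `C i` extended by independent noise `A i`, each
repeated `K` times. -/
lemma norm_sum_noise_sq_le [Fintype ι] [DecidableEq ι] {C' : ∀ i, F i →L[ℝ] X}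
    {A' : ∀ i, F i →L[ℝ] F i} {p : ι → ℝ} (hp : ∀ i, 0 ≤ p i)
    (hCA : ∀ i w, ‖C' i w‖ ^ 2 + ‖A' i w‖ ^ 2 = ‖w‖ ^ 2)
    (hBL : ∀ w : ∀ i, F i, ‖∑ i, p i • C' i (w i)‖ ^ 2 ≤ ∑ i, p i * ‖w i‖ ^ 2)
    {K : ℕ} (hK : 0 < K) {θ : ℝ} (hθ0 : 0 ≤ θ) (hθ1 : θ ≤ 1) (hθ : ∀ i, p i / K ≤ 1 - θ)
    (w : ∀ j : ι × Fin K, F j.1) :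
    ‖∑ j : ι × Fin K, (θ * p j.1 / K) • (WithLp.toLp 2 (C' j.1 (w j),
        PiLp.single 2 j (A' j.1 (w j))) : WithLp 2 (X × PiLp 2 fun j : ι × Fin K => F j.1))‖ ^ 2
      ≤ ∑ j : ι × Fin K, θ * p j.1 / K * ‖w j‖ ^ 2 := by
  have hK' : (0 : ℝ) < K := by exact_mod_cast hK
  have hfst : ‖∑ j : ι × Fin K, (θ * p j.1 / K) • C' j.1 (w j)‖ ^ 2
      ≤ θ * ∑ j : ι × Fin K, θ * p j.1 / K * ‖w j‖ ^ 2 := by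
    have e : ∑ j : ι × Fin K, (θ * p j.1 / K) • C' j.1 (w j)
        = ∑ i, p i • C' i ((θ / K) • ∑ k, w (i, k)) := by
      rw [Fintype.sum_prod_type]
      refine Finset.sum_congr rfl fun i _ => ?_
      rw [map_smul, map_sum, smul_smul, Finset.smul_sum]
      exact Finset.sum_congr rfl fun k _ => by congr 1; ring
    rw [e]
    refine (hBL _).trans ?_
    rw [Fintype.sum_prod_type, Finset.mul_sum]
    refine Finset.sum_le_sum fun i _ => ?_
    exact mul_norm_smul_sum_sq_le (V := F i) (hp i) hK hθ0 fun k => w (i, k)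
  have hsnd : ∑ j : ι × Fin K, ‖(θ * p j.1 / K) • A' j.1 (w j)‖ ^ 2
      ≤ (1 - θ) * ∑ j : ι × Fin K, θ * p j.1 / K * ‖w j‖ ^ 2 := by
    rw [Finset.mul_sum]
    refine Finset.sum_le_sum fun j _ => ?_
    have hp' := hp j.1
    rw [norm_smul, mul_pow, Real.norm_of_nonneg (by positivity), sq (θ * p j.1 / K)]
    have h1 : θ * p j.1 / K ≤ 1 - θ := by
      refine le_trans ?_ (hθ j.1)
      gcongr
      exact mul_le_of_le_one_left hp' hθ1
    have h2 : ‖A' j.1 (w j)‖ ^ 2 ≤ ‖w j‖ ^ 2 := by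
      have := hCA j.1 (w j)
      nlinarith [sq_nonneg ‖C' j.1 (w j)‖]
    rw [← mul_assoc]
    gcongr
  have e1 : (∑ j : ι × Fin K, (θ * p j.1 / K) • (WithLp.toLp 2 (C' j.1 (w j),
        PiLp.single 2 j (A' j.1 (w j))) : WithLp 2 (X × PiLp 2 fun j : ι × Fin K => F j.1)))
      = WithLp.toLp 2 (∑ j : ι × Fin K, (θ * p j.1 / K) • C' j.1 (w j),
        WithLp.toLp 2 fun j => (θ * p j.1 / K) • A' j.1 (w j)) := by
    apply (WithLp.prodContinuousLinearEquiv 2 ℝ X _).injective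
    rw [map_sum]
    refine Prod.ext ?_ ?_
    · rw [Prod.fst_sum]; rfl
    · rw [Prod.snd_sum]
      ext j
      rw [WithLp.ofLp_sum, Finset.sum_apply, Finset.sum_eq_single j]
      · simp
      · intro b _ hb
        simp [Pi.single_eq_of_ne hb.symm]
      · simp
  rw [e1, WithLp.prod_norm_sq_eq_of_L2]
  simp only [WithLp.toLp_fst, WithLp.toLp_snd, PiLp.norm_sq_eq_of_L2]
  linarith

end NoiseMaps

section NoiseExtension

variable {X Z : Type*} [NormedAddCommGroup X] [InnerProductSpace ℝ X]
  [FiniteDimensional ℝ X] [MeasurableSpace X] [BorelSpace X]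
  [NormedAddCommGroup Z] [InnerProductSpace ℝ Z]
  [FiniteDimensional ℝ Z] [MeasurableSpace Z] [BorelSpace Z]

lemma map_fst_stdGaussian : (ProbabilityTheory.stdGaussian (WithLp 2 (X × Z))).map
    (WithLp.fstL 2 ℝ X Z) = ProbabilityTheory.stdGaussian X :=
  map_stdGaussian_of_adjoint_isometry _ (fun x => WithLp.toLp 2 (x, 0))
    (fun x w => by simp [WithLp.prod_inner_apply]) fun w => by
      simp

lemma map_reflectSnd_stdGaussian : (ProbabilityTheory.stdGaussian (WithLp 2 (X × Z))).map
    (reflectSnd X Z) = ProbabilityTheory.stdGaussian (WithLp 2 (X × Z)) :=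
  map_stdGaussian_of_adjoint_isometry _ (reflectSnd X Z)
    (fun x w => by simp [WithLp.prod_inner_apply, reflectSnd_apply]) fun w => by
      rw [← sq_eq_sq₀ (norm_nonneg _) (norm_nonneg _)]
      simp [WithLp.prod_norm_sq_eq_of_L2, reflectSnd_apply]

lemma lintegral_le_of_sq_le_mul_reflectSnd {G : WithLp 2 (X × Z) → ℝ} {H : X → ℝ}
    (hG : Measurable G) (hH : Measurable H) (hG0 : ∀ g, 0 ≤ G g)
    (h : ∀ g, H g.fst ^ 2 ≤ G g * G (reflectSnd X Z g)) :
    ∫⁻ x, ENNReal.ofReal (H x) ∂(ProbabilityTheory.stdGaussian X)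
      ≤ ∫⁻ g, ENNReal.ofReal (G g) ∂(ProbabilityTheory.stdGaussian (WithLp 2 (X × Z))) := by
  have h1 : ∀ g, 2 * H g.fst ≤ G g + G (reflectSnd X Z g) := fun g =>
    abs_le_of_sq_le_sq' (by nlinarith [h g, sq_nonneg (G g - G (reflectSnd X Z g))])
      (add_nonneg (hG0 _) (hG0 _)) |>.2
  have h2 : ∫⁻ g, ENNReal.ofReal (G (reflectSnd X Z g))
        ∂(ProbabilityTheory.stdGaussian (WithLp 2 (X × Z)))
      = ∫⁻ g, ENNReal.ofReal (G g) ∂(ProbabilityTheory.stdGaussian (WithLp 2 (X × Z))) := by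
    conv_rhs => rw [← map_reflectSnd_stdGaussian,
      lintegral_map hG.ennreal_ofReal (reflectSnd X Z).continuous.measurable]
  have h3 : 2 * ∫⁻ x, ENNReal.ofReal (H x) ∂(ProbabilityTheory.stdGaussian X)
      ≤ 2 * ∫⁻ g, ENNReal.ofReal (G g) ∂(ProbabilityTheory.stdGaussian (WithLp 2 (X × Z))) := by
    rw [← map_fst_stdGaussian (X := X) (Z := Z),
      lintegral_map hH.ennreal_ofReal (WithLp.fstL 2 ℝ X Z).continuous.measurable,
      ← lintegral_const_mul' _ _ (by simp)]
    conv_rhs => rw [two_mul]; enter [2]; rw [← h2]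
    rw [← lintegral_add_left hG.ennreal_ofReal]
    refine lintegral_mono fun g => ?_
    rw [← ENNReal.ofReal_add (hG0 _) (hG0 _)]
    calc 2 * ENNReal.ofReal (H g.fst) = ENNReal.ofReal (2 * H g.fst) := by
          rw [ENNReal.ofReal_mul zero_le_two]; simp
      _ ≤ _ := ENNReal.ofReal_le_ofReal (h1 g)
  exact (ENNReal.mul_le_mul_iff_right (by simp) (by simp)).1 h3

variable {ι : Type*} [Fintype ι]
  {F : ι → Type*} [∀ i, NormedAddCommGroup (F i)] [∀ i, InnerProductSpace ℝ (F i)]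
  [∀ i, FiniteDimensional ℝ (F i)] [∀ i, MeasurableSpace (F i)] [∀ i, BorelSpace (F i)]
  {C : ∀ i, X →L[ℝ] F i} {C' : ∀ i, F i →L[ℝ] X} {A A' : ∀ i, F i →L[ℝ] F i} {p : ι → ℝ}

lemma lintegral_prod_rpow_mul_le
    (hC : ∀ i x w, inner ℝ (C i x) w = inner ℝ x (C' i w))
    (hA : ∀ i x w, inner ℝ (A i x) w = inner ℝ x (A' i w))
    (hCA : ∀ i w, ‖C' i w‖ ^ 2 + ‖A' i w‖ ^ 2 = ‖w‖ ^ 2) (hp : ∀ i, 0 ≤ p i)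
    (hBL : ∀ w : ∀ i, F i, ‖∑ i, p i • C' i (w i)‖ ^ 2 ≤ ∑ i, p i * ‖w i‖ ^ 2)
    {f : ∀ i, F i → ℝ} (hf : ∀ i, Continuous (f i)) (hf0 : ∀ i x, 0 ≤ f i x)
    (hfi : ∀ i, Integrable (f i) (ProbabilityTheory.stdGaussian (F i)))
    (hfA : ∀ i y z, f i y ^ 2 ≤ f i (y + A i z) * f i (y - A i z))
    {K : ℕ} (hK : 0 < K) {θ : ℝ} (hθ0 : 0 ≤ θ) (hθ1 : θ ≤ 1) (hθ : ∀ i, p i / K ≤ 1 - θ) :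
    ∫⁻ x, ENNReal.ofReal (∏ i, f i (C i x) ^ (θ * p i)) ∂(ProbabilityTheory.stdGaussian X)
      ≤ ENNReal.ofReal
        (∏ i, (∫ y, f i y ∂(ProbabilityTheory.stdGaussian (F i))) ^ (θ * p i)) := by
  classical
  have hK' : (0 : ℝ) < K := by exact_mod_cast hK
  have hc : ∀ j : ι × Fin K, 0 ≤ θ * p j.1 / K := fun j =>
    div_nonneg (mul_nonneg hθ0 (hp _)) hK'.le
  have hprod : ∀ t : ι → ℝ, (∀ i, 0 ≤ t i) →
      ∏ j : ι × Fin K, t j.1 ^ (θ * p j.1 / K) = ∏ i, t i ^ (θ * p i) := by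
    intro t ht
    rw [Fintype.prod_prod_type]
    refine Finset.prod_congr rfl fun i _ => ?_
    change ∏ _k : Fin K, t i ^ (θ * p i / K) = _
    rw [Finset.prod_const, Finset.card_univ, Fintype.card_fin, ← Real.rpow_natCast,
      ← Real.rpow_mul (ht i), div_mul_cancel₀ _ hK'.ne']
  have hcontG : Continuous fun g => ∏ j : ι × Fin K,
      f j.1 (noiseMap C A K j g) ^ (θ * p j.1 / K) :=
    continuous_finsetProd _ fun j _ => ((hf _).comp (noiseMap C A K j).continuous).rpow_const
      fun x => Or.inr (hc j)
  have hcontH : Continuous fun x => ∏ i, f i (C i x) ^ (θ * p i) :=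
    continuous_finsetProd _ fun i _ => ((hf _).comp (C i).continuous).rpow_const
      fun x => Or.inr (mul_nonneg hθ0 (hp i))
  rw [← hprod _ fun i => integral_nonneg (hf0 i)]
  refine le_trans (lintegral_le_of_sq_le_mul_reflectSnd hcontG.measurable hcontH.measurable
    (fun g => Finset.prod_nonneg fun j _ => Real.rpow_nonneg (hf0 _ _) _) fun g => ?_)
    (lintegral_prod_rpow_le_of_adjoint_isometry (F := fun j : ι × Fin K => F j.1)
      (B := noiseMap C A K) (B' := fun j w => WithLp.toLp 2 (C' j.1 w, PiLp.single 2 j (A' j.1 w)))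
      ?_ ?_ hc (norm_sum_noise_sq_le hp hCA hBL hK hθ0 hθ1 hθ)
      (fun j => hf j.1) (fun j => hf0 j.1) fun j => hfi j.1)
  · rw [← hprod _ fun i => hf0 i _, ← Finset.prod_pow, ← Finset.prod_mul_distrib]
    refine Finset.prod_le_prod (fun j _ => sq_nonneg _) fun j _ => ?_
    rw [← Real.mul_rpow (hf0 _ _) (hf0 _ _), ← Real.rpow_natCast, ← Real.rpow_mul (hf0 _ _),
      mul_comm _ ((2 : ℕ) : ℝ), Real.rpow_mul (hf0 _ _), Real.rpow_natCast]
    refine Real.rpow_le_rpow (sq_nonneg _) ?_ (hc j)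
    have := hfA j.1 (C j.1 g.fst) (g.snd j)
    simpa [noiseMap_apply, reflectSnd_apply, sub_eq_add_neg] using this
  · intro j x w
    rw [noiseMap_apply, inner_add_left, hC, hA, WithLp.prod_inner_apply]
    congr 1
    rw [PiLp.inner_apply, Finset.sum_eq_single j]
    · simp
    · intro b _ hb
      simp [Pi.single_eq_of_ne hb]
    · simp
  · intro j w
    rw [← sq_eq_sq₀ (norm_nonneg _) (norm_nonneg _), WithLp.prod_norm_sq_eq_of_L2]
    simpa using hCA j.1 w

lemma lintegral_prod_rpow_le_of_noise
    (hC : ∀ i x w, inner ℝ (C i x) w = inner ℝ x (C' i w))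
    (hA : ∀ i x w, inner ℝ (A i x) w = inner ℝ x (A' i w))
    (hCA : ∀ i w, ‖C' i w‖ ^ 2 + ‖A' i w‖ ^ 2 = ‖w‖ ^ 2) (hp : ∀ i, 0 < p i)
    (hBL : ∀ w : ∀ i, F i, ‖∑ i, p i • C' i (w i)‖ ^ 2 ≤ ∑ i, p i * ‖w i‖ ^ 2)
    {f : ∀ i, F i → ℝ} (hf : ∀ i, Continuous (f i)) (hf0 : ∀ i x, 0 ≤ f i x)
    (hfi : ∀ i, Integrable (f i) (ProbabilityTheory.stdGaussian (F i)))
    (hfA : ∀ i y z, f i y ^ 2 ≤ f i (y + A i z) * f i (y - A i z)) :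
    ∫⁻ x, ENNReal.ofReal (∏ i, f i (C i x) ^ p i) ∂(ProbabilityTheory.stdGaussian X)
      ≤ ENNReal.ofReal (∏ i, (∫ y, f i y ∂(ProbabilityTheory.stdGaussian (F i))) ^ p i) := by
  have hp0 : ∀ i, 0 ≤ p i := fun i => (hp i).le
  have hS : 0 ≤ ∑ i, p i := Finset.sum_nonneg fun i _ => hp0 i
  set θ : ℕ → ℝ := fun K => max (1 - (∑ i, p i) / K) 0 with hθ
  have hθ0 : ∀ K, 0 ≤ θ K := fun K => le_max_right _ _
  have hθlim : Filter.Tendsto θ Filter.atTop (nhds 1) := by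
    have h1 : Filter.Tendsto (fun K : ℕ => (∑ i, p i) / (K : ℝ)) Filter.atTop (nhds 0) :=
      tendsto_const_div_atTop_nhds_zero_nat _
    have h2 := (h1.const_sub 1).max (tendsto_const_nhds (x := (0 : ℝ)))
    simpa only [sub_zero, max_eq_left zero_le_one] using h2
  have hexp : ∀ i (t : ℝ),
      Filter.Tendsto (fun K => t ^ (θ K * p i)) Filter.atTop (nhds (t ^ p i)) := by
    intro i t
    refine tendsto_const_nhds.rpow (by simpa using hθlim.mul_const (p i)) (Or.inr (hp i))
  refine lintegral_ofReal_le_of_tendsto (φ := fun K x => ∏ i, f i (C i x) ^ (θ K * p i))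
    (fun K => Continuous.measurable <| continuous_finsetProd _ fun i _ =>
      ((hf _).comp (C i).continuous).rpow_const fun x => Or.inr (mul_nonneg (hθ0 K) (hp0 i)))
    (fun x => tendsto_finsetProd _ fun i _ => hexp i _)
    (tendsto_finsetProd _ fun i _ => hexp i _) ?_
  filter_upwards [Filter.eventually_gt_atTop 0,
    tendsto_natCast_atTop_atTop.eventually_ge_atTop (∑ i, p i)] with K hK hKS
  have hK' : (0 : ℝ) < K := by exact_mod_cast hK
  have e : θ K = 1 - (∑ i, p i) / K := max_eq_left (sub_nonneg.2 ((div_le_one hK').2 hKS))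
  refine lintegral_prod_rpow_mul_le hC hA hCA hp0 hBL hf hf0 hfi hfA hK (hθ0 K) ?_ fun i => ?_
  · rw [e]; linarith [div_nonneg hS hK'.le]
  · rw [e, sub_sub_cancel]
    gcongr
    exact Finset.single_le_sum (fun i _ => hp0 i) (Finset.mem_univ i)

end NoiseExtension

section EuclideanTransfer

lemma gaussianDensity_eq_prod {k : ℕ} (x : Fin k → ℝ) :
    (2 * Real.pi) ^ (-(k : ℝ) / 2) * Real.exp (-(∑ i, x i ^ 2) / 2)
      = ∏ i, ProbabilityTheory.gaussianPDFReal 0 1 (x i) := by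
  have h : 0 < 2 * Real.pi := by positivity
  simp only [ProbabilityTheory.gaussianPDFReal, NNReal.coe_one, mul_one, sub_zero]
  rw [Finset.prod_mul_distrib, ← Real.exp_sum, Finset.prod_const, Finset.card_univ,
    Fintype.card_fin, Real.sqrt_eq_rpow, ← Real.rpow_neg h.le, ← Real.rpow_natCast,
    ← Real.rpow_mul h.le, ← Finset.sum_div, Finset.sum_neg_distrib]
  congr 2
  ring

lemma stdGaussian_eq_pi (k : ℕ) :
    stdGaussian k = Measure.pi fun _ => ProbabilityTheory.gaussianReal 0 1 := by
  refine (Measure.pi_eq fun s hs => ?_).symm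
  have hint : ∀ i, Integrable (ProbabilityTheory.gaussianPDFReal 0 1) (volume.restrict (s i)) :=
    fun i => (ProbabilityTheory.integrable_gaussianPDFReal 0 1).restrict
  have h0 : ∀ x, 0 ≤ ProbabilityTheory.gaussianPDFReal 0 1 x :=
    ProbabilityTheory.gaussianPDFReal_nonneg 0 1
  simp only [stdGaussian, gaussianDensity_eq_prod]
  rw [withDensity_apply _ (MeasurableSet.univ_pi hs), volume_pi, Measure.restrict_pi_pi,
    ← ofReal_integral_eq_lintegral_ofReal (Integrable.fintype_prod hint)
      (.of_forall fun x => Finset.prod_nonneg fun i _ => h0 _),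
    integral_fintype_prod_eq_prod (fun _ => ProbabilityTheory.gaussianPDFReal 0 1),
    ENNReal.ofReal_prod_of_nonneg fun i _ => integral_nonneg h0]
  exact Finset.prod_congr rfl fun i _ =>
    (ProbabilityTheory.gaussianReal_apply_eq_integral 0 one_ne_zero (s i)).symm

lemma stdGaussian_eq_map (k : ℕ) : stdGaussian k =
    (ProbabilityTheory.stdGaussian (EuclideanSpace ℝ (Fin k))).map WithLp.ofLp := by
  rw [stdGaussian_eq_pi, ← ProbabilityTheory.map_pi_eq_stdGaussian, Measure.map_map
    (WithLp.measurable_ofLp 2 _) (WithLp.measurable_toLp 2 _)]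
  exact Measure.map_id.symm

variable {k l : ℕ}

lemma LogConvexFun.continuous {h : (Fin k → ℝ) → ℝ} (hh : LogConvexFun h) : Continuous h := by
  by_cases hz : ∃ x, h x = 0
  · obtain ⟨x, hx⟩ := hz
    have : h = fun _ => 0 := by
      funext w
      refine le_antisymm ?_ (hh.1 w)
      have h1 := hh.2 x ((2 : ℝ) • w - x) (1 / 2) (1 / 2) (by norm_num) (by norm_num) (by norm_num)
      rw [hx, Real.zero_rpow (by norm_num), zero_mul] at h1
      have e : (1 / 2 : ℝ) • x + (1 / 2 : ℝ) • ((2 : ℝ) • w - x) = w := by module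
      rwa [e] at h1
    rw [this]
    exact continuous_const
  · push Not at hz
    have hpos : ∀ x, 0 < h x := fun x => (hh.1 x).lt_of_ne' (hz x)
    have hconv : ConvexOn ℝ Set.univ fun x => Real.log (h x) := by
      refine ⟨convex_univ, fun x _ y _ a b ha hb hab => ?_⟩
      have h1 := Real.log_le_log (hpos _) (hh.2 x y a b ha hb hab)
      rwa [Real.log_mul (Real.rpow_pos_of_pos (hpos _) _).ne'
        (Real.rpow_pos_of_pos (hpos _) _).ne', Real.log_rpow (hpos _), Real.log_rpow (hpos _)] at h1
    have hc : Continuous fun x => Real.log (h x) :=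
      continuousOn_univ.1 (hconv.continuousOn isOpen_univ)
    exact (Real.continuous_exp.comp hc).congr fun x => Real.exp_log (hpos x)

lemma MoreLogConvex.continuous {f : (Fin k → ℝ) → ℝ} {Q : Matrix (Fin k) (Fin k) ℝ}
    (hf : MoreLogConvex f Q) : Continuous f := by
  obtain ⟨h, hh, rfl⟩ := hf
  have := hh.continuous
  unfold gaussFn
  fun_prop

lemma gaussFn_add_of_mulVec_eq_zero {Q : Matrix (Fin k) (Fin k) ℝ} (hQ : Qᵀ = Q) {v : Fin k → ℝ}
    (hv : Q *ᵥ v = 0) (y : Fin k → ℝ) : gaussFn Q (y + v) = gaussFn Q y := by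
  have h : Q *ᵥ y ⬝ᵥ v = 0 := by
    rw [dotProduct_comm, dotProduct_mulVec, ← mulVec_transpose, hQ, hv, zero_dotProduct]
  simp only [gaussFn, mulVec_add, hv, add_zero, dotProduct_add, h]

lemma MoreLogConvex.sq_le_mul {f : (Fin k → ℝ) → ℝ} {Q : Matrix (Fin k) (Fin k) ℝ}
    (hf : MoreLogConvex f Q) (hQ : Qᵀ = Q) {v : Fin k → ℝ} (hv : Q *ᵥ v = 0) (y : Fin k → ℝ) :
    f y ^ 2 ≤ f (y + v) * f (y - v) := by
  obtain ⟨h, hh, rfl⟩ := hf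
  have hv' : Q *ᵥ (-v) = 0 := by rw [mulVec_neg, hv, neg_zero]
  have h1 := hh.2 (y + v) (y - v) (1 / 2) (1 / 2) (by norm_num) (by norm_num) (by norm_num)
  have e : (1 / 2 : ℝ) • (y + v) + (1 / 2 : ℝ) • (y - v) = y := by module
  rw [e, ← Real.mul_rpow (hh.1 _) (hh.1 _), ← Real.sqrt_eq_rpow,
    Real.le_sqrt (hh.1 _) (mul_nonneg (hh.1 _) (hh.1 _))] at h1
  simp only [gaussFn_add_of_mulVec_eq_zero hQ hv, sub_eq_add_neg,
    gaussFn_add_of_mulVec_eq_zero hQ hv'] at h1 ⊢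
  nlinarith [mul_le_mul_of_nonneg_left h1 (sq_nonneg (gaussFn Q y))]

lemma inner_toEuclideanLin_left (M : Matrix (Fin k) (Fin l) ℝ) (x : EuclideanSpace ℝ (Fin l))
    (w : EuclideanSpace ℝ (Fin k)) :
    inner ℝ (toEuclideanLin M x) w = inner ℝ x (toEuclideanLin Mᵀ w) := by
  simp only [EuclideanSpace.inner_eq_star_dotProduct, ofLp_toLpLin, toLin'_apply, star_trivial]
  rw [dotProduct_mulVec, mulVec_transpose]

lemma euclidean_norm_sq_eq_dotProduct {κ : Type*} [Fintype κ] (x : EuclideanSpace ℝ κ) :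
    ‖x‖ ^ 2 = x.ofLp ⬝ᵥ x.ofLp := by
  rw [EuclideanSpace.real_norm_sq_eq]
  simp [dotProduct, sq]

lemma dotProduct_mul_transpose_mulVec {κ κ' : Type*} [Fintype κ] [Fintype κ']
    (M : Matrix κ κ' ℝ) (w : κ → ℝ) : w ⬝ᵥ (M * Mᵀ) *ᵥ w = Mᵀ *ᵥ w ⬝ᵥ Mᵀ *ᵥ w := by
  rw [← mulVec_mulVec, dotProduct_mulVec, mulVec_transpose]

open scoped MatrixOrder ComplexOrder in
lemma exists_transpose_mul_self_eq {S : Matrix (Fin k) (Fin k) ℝ} (hS : S.PosSemidef) :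
    ∃ B : Matrix (Fin k) (Fin k) ℝ, S = Bᵀ * B := by
  obtain ⟨B, hB⟩ := CStarAlgebra.nonneg_iff_eq_star_mul_self.mp hS.nonneg
  exact ⟨B, by rw [hB, star_eq_conjTranspose, conjTranspose_eq_transpose_of_trivial]⟩

/-- The block condition `C Cᵀ ≤ P⁻¹`, tested on the vectors `P w`. -/
lemma norm_sum_smul_toEuclideanLin_sq_le {n m : ℕ} {ni : Fin m → ℕ}
    {C : ∀ i, Matrix (Fin (ni i)) (Fin n) ℝ} {p : Fin m → ℝ} (hp : ∀ i, 0 < p i)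
    (hCCP : (((Matrix.diagonal fun q : Σ i : Fin m, Fin (ni i) => p q.1)⁻¹ :
          Matrix (Σ i : Fin m, Fin (ni i)) (Σ i : Fin m, Fin (ni i)) ℝ) -
        (Matrix.of fun (q : Σ i : Fin m, Fin (ni i)) (a : Fin n) => C q.1 q.2 a) *
          (Matrix.of fun (q : Σ i : Fin m, Fin (ni i)) (a : Fin n) => C q.1 q.2 a)ᵀ).PosSemidef)
    (w : ∀ i, EuclideanSpace ℝ (Fin (ni i))) :
    ‖∑ i, p i • toEuclideanLin (C i)ᵀ (w i)‖ ^ 2 ≤ ∑ i, p i * ‖w i‖ ^ 2 := by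
  set M : Matrix (Σ i : Fin m, Fin (ni i)) (Fin n) ℝ := Matrix.of fun q a => C q.1 q.2 a
  set v : (Σ i : Fin m, Fin (ni i)) → ℝ := fun q => p q.1 * w q.1 q.2 with hv
  have hinv : (Matrix.diagonal fun q : Σ i : Fin m, Fin (ni i) => p q.1)⁻¹
      = Matrix.diagonal fun q => (p q.1)⁻¹ := by
    refine Matrix.inv_eq_left_inv ?_
    rw [diagonal_mul_diagonal, ← diagonal_one]
    congr 1
    funext q
    exact inv_mul_cancel₀ (hp _).ne'
  have h := hCCP.dotProduct_mulVec_nonneg v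
  rw [hinv, star_trivial, sub_mulVec, dotProduct_sub, dotProduct_mul_transpose_mulVec,
    sub_nonneg] at h
  have e1 : Mᵀ *ᵥ v = (∑ i, p i • toEuclideanLin (C i)ᵀ (w i)).ofLp := by
    funext a
    simp only [mulVec, dotProduct, WithLp.ofLp_sum, Finset.sum_apply, PiLp.smul_apply,
      ofLp_toLpLin, toLin'_apply, Fintype.sum_sigma, smul_eq_mul, Finset.mul_sum, hv]
    refine Finset.sum_congr rfl fun i _ => Finset.sum_congr rfl fun b _ => ?_
    simp only [transpose_apply, M, of_apply]
    ring
  have e2 : v ⬝ᵥ (Matrix.diagonal fun q : Σ i : Fin m, Fin (ni i) => (p q.1)⁻¹) *ᵥ v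
      = ∑ i, p i * ‖w i‖ ^ 2 := by
    simp only [dotProduct, mulVec_diagonal, Fintype.sum_sigma, EuclideanSpace.real_norm_sq_eq,
      Finset.mul_sum, hv]
    refine Finset.sum_congr rfl fun i _ => Finset.sum_congr rfl fun b _ => ?_
    have := (hp i).ne'
    field_simp
  rwa [e2, e1, ← euclidean_norm_sq_eq_dotProduct] at h

end EuclideanTransfer

/-- Gaussian Brascamp–Lieb inequality under the block condition `C Cᵀ ≤ P⁻¹`. -/
theorem gaussian_brascamp_lieb_of_block_condition
    {n m : ℕ} (hnm : n ≤ m) {ni : Fin m → ℕ}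
    (hni_pos : ∀ i, 0 < ni i) (hni_le : ∀ i, ni i ≤ n)
    (C : ∀ i, Matrix (Fin (ni i)) (Fin n) ℝ)
    (Q : ∀ i, Matrix (Fin (ni i)) (Fin (ni i)) ℝ)
    (hCC : ∀ i, ((1 : Matrix (Fin (ni i)) (Fin (ni i)) ℝ) - C i * (C i)ᵀ).PosSemidef)
    (hQ1 : ∀ i, (Q i - 1).PosSemidef)
    (hcomp : ∀ i, ((1 : Matrix (Fin (ni i)) (Fin (ni i)) ℝ) - C i * (C i)ᵀ) * (Q i - 1) = 0)
    (p : Fin m → ℝ) (hp : ∀ i, 0 < p i)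
    (hCCP : (((Matrix.diagonal fun q : Σ i : Fin m, Fin (ni i) => p q.1)⁻¹ :
          Matrix (Σ i : Fin m, Fin (ni i)) (Σ i : Fin m, Fin (ni i)) ℝ) -
        (Matrix.of fun (q : Σ i : Fin m, Fin (ni i)) (a : Fin n) => C q.1 q.2 a) *
          (Matrix.of fun (q : Σ i : Fin m, Fin (ni i)) (a : Fin n) => C q.1 q.2 a)ᵀ).PosSemidef)
    (f : ∀ i, (Fin (ni i) → ℝ) → ℝ)
    (hf0 : ∀ i x, 0 ≤ f i x)
    (hfint : ∀ i, Integrable (f i) (stdGaussian (ni i)))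
    (hflc : ∀ i, MoreLogConvex (f i) ((2 * Real.pi)⁻¹ • (Q i - 1))) :
    (∫⁻ x, ENNReal.ofReal (∏ i, f i ((C i).mulVec x) ^ p i) ∂ stdGaussian n) ≤
      ∏ i, ENNReal.ofReal (∫ y, f i y ∂ stdGaussian (ni i)) ^ p i := by
  choose B hB using fun i => exists_transpose_mul_self_eq (hCC i)
  have hBQ : ∀ i, ((2 * Real.pi)⁻¹ • (Q i - 1)) * (B i)ᵀ = 0 := by
    intro i
    have h1 := hcomp i
    rw [hB i, ← conjTranspose_eq_transpose_of_trivial, conjTranspose_mul_self_mul_eq_zero] at h1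
    have h2 : (Q i - 1)ᵀ = Q i - 1 := by
      rw [← conjTranspose_eq_transpose_of_trivial]; exact (hQ1 i).isHermitian
    rw [smul_mul, ← h2, ← transpose_mul, h1, transpose_zero, smul_zero]
  have hQT : ∀ i, ((2 * Real.pi)⁻¹ • (Q i - 1))ᵀ = (2 * Real.pi)⁻¹ • (Q i - 1) := by
    intro i
    rw [transpose_smul, ← conjTranspose_eq_transpose_of_trivial, (hQ1 i).isHermitian]
  have hcont : ∀ i, Continuous (f i) := fun i => (hflc i).continuous
  have hmeas : ∀ k, Measurable (WithLp.ofLp : EuclideanSpace ℝ (Fin k) → Fin k → ℝ) := fun k =>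
    WithLp.measurable_ofLp 2 _
  have hcontprod : Continuous fun x => ∏ i, f i ((C i).mulVec x) ^ p i :=
    continuous_finsetProd _ fun i _ => ((hcont i).comp (by fun_prop)).rpow_const
      fun x => Or.inr (hp i).le
  have key := lintegral_prod_rpow_le_of_noise (X := EuclideanSpace ℝ (Fin n))
    (F := fun i => EuclideanSpace ℝ (Fin (ni i)))
    (C := fun i => (toEuclideanLin (C i)).toContinuousLinearMap)
    (C' := fun i => (toEuclideanLin (C i)ᵀ).toContinuousLinearMap)
    (A := fun i => (toEuclideanLin (B i)ᵀ).toContinuousLinearMap)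
    (A' := fun i => (toEuclideanLin (B i)).toContinuousLinearMap)
    (fun i => inner_toEuclideanLin_left (C i))
    (fun i x w => by simpa using inner_toEuclideanLin_left (B i)ᵀ x w)
    (fun i w => ?_) hp (norm_sum_smul_toEuclideanLin_sq_le hp hCCP)
    (f := fun i y => f i y.ofLp) (fun i => (hcont i).comp (PiLp.continuous_ofLp 2 _))
    (fun i y => hf0 i _) (fun i => ?_) fun i y z => ?_
  · rw [stdGaussian_eq_map, lintegral_map hcontprod.measurable.ennreal_ofReal (hmeas n)]
    have hint : ∀ i, ∫ y, f i y ∂stdGaussian (ni i) = ∫ y : EuclideanSpace ℝ (Fin (ni i)),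
        f i y.ofLp ∂ProbabilityTheory.stdGaussian (EuclideanSpace ℝ (Fin (ni i))) := fun i => by
      rw [stdGaussian_eq_map, integral_map (hmeas _).aemeasurable
        (hcont i).aestronglyMeasurable]
    have h0 : ∀ i, 0 ≤ ∫ y, f i y ∂stdGaussian (ni i) := fun i => integral_nonneg (hf0 i)
    simp only [← hint] at key
    rw [ENNReal.ofReal_prod_of_nonneg fun i _ => Real.rpow_nonneg (h0 i) _] at key
    simp only [← ENNReal.ofReal_rpow_of_nonneg (h0 _) (hp _).le] at key
    exact key
  · have h1 : w.ofLp ⬝ᵥ ((1 : Matrix (Fin (ni i)) (Fin (ni i)) ℝ) - C i * (C i)ᵀ) *ᵥ w.ofLp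
        = w.ofLp ⬝ᵥ ((B i)ᵀ * (B i)ᵀᵀ) *ᵥ w.ofLp := by rw [hB i, transpose_transpose]
    rw [dotProduct_mul_transpose_mulVec, sub_mulVec, one_mulVec, dotProduct_sub,
      dotProduct_mul_transpose_mulVec, transpose_transpose] at h1
    simp only [euclidean_norm_sq_eq_dotProduct, LinearMap.coe_toContinuousLinearMap',
      ofLp_toLpLin, toLin'_apply]
    linarith
  · have h1 := hfint i
    rwa [stdGaussian_eq_map, integrable_map_measure (hcont i).aestronglyMeasurable
      (hmeas _).aemeasurable] at h1
  · exact (hflc i).sq_le_mul (hQT i) (v := (B i)ᵀ *ᵥ z.ofLp)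
      (by rw [mulVec_mulVec, hBQ, zero_mulVec]) y.ofLp
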